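/- Let (X,f) be a TDS, φ: X → ℝ continuous, and μ ∈ M(X,f). For any ergodic decomposition τ of μ, P_μ(f,φ) = ess sup{P_ν(f,φ) : ν ∈ E(X,f)} = ess sup{h_ν(f) + ∫_X φ dν : ν ∈ E(X,f)}, with the essential supremum taken with respect to τ. Consequently, P_μ(f,φ) ≥ h_μ(f) + ∫_X φ dμ. -/

import Mathlib

open MeasureTheory Filter Set
open scoped ENNReal NNReal

namespace Paper

variable {X : Type*}

/-- Birkhoff sum `S_n φ(x) = ∑_{i<n} φ(f^i x)`. -/
def birk (f : X → X) (φ : X → ℝ) (n : ℕ) (x : X) : ℝ :=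
  ∑ i ∈ Finset.range n, φ (f^[i] x)

section Metric

variable [MetricSpace X]

/-- The Bowen ball `B_n(x, ε) = {y : d_n(x,y) < ε}`. -/
def bowenBall (f : X → X) (x : X) (n : ℕ) (ε : ℝ) : Set X :=
  {y | ∀ i < n, dist (f^[i] x) (f^[i] y) < ε}

/-- The number of indices `0 ≤ j ≤ n-1` with `dist (f^j x, f^j y) > ε`. -/
noncomputable def sepCount (f : X → X) (ε : ℝ) (n : ℕ) (x y : X) : ℕ :=
  Nat.card {j : ℕ // j < n ∧ ε < dist (f^[j] x) (f^[j] y)}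

/-- `A` is an `(n,ε)`-separated set. -/
def IsNSep (f : X → X) (n : ℕ) (ε : ℝ) (A : Set X) : Prop :=
  ∀ x ∈ A, ∀ y ∈ A, x ≠ y → ∃ j < n, ε < dist (f^[j] x) (f^[j] y)

/-- `A` is a `(δ,n,ε)`-separated set. -/
def IsDeltaSep (f : X → X) (δ : ℝ) (n : ℕ) (ε : ℝ) (A : Set X) : Prop :=
  ∀ x ∈ A, ∀ y ∈ A, x ≠ y → δ * n ≤ (sepCount f ε n x y : ℝ)

end Metric

section Entropy

variable [MeasurableSpace X]

/-- A finite measurable partition of `X`. -/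
def IsFinPartition (s : Finset (Set X)) : Prop :=
  (∀ A ∈ s, MeasurableSet A) ∧ ⋃₀ (s : Set (Set X)) = Set.univ ∧
    (s : Set (Set X)).Pairwise Disjoint

/-- The entropy `H(μ, ⋁_{i<n} f^{-i} ξ)` of the `n`-th dynamical refinement of the
partition `s` (with the convention `0 · log 0 = 0`). -/
noncomputable def dynH (f : X → X) (μ : Measure X) (s : Finset (Set X)) (n : ℕ) : ℝ :=
  -∑ w : Fin n → {A // A ∈ s},
      (μ (⋂ i : Fin n, f^[(i : ℕ)] ⁻¹' ((w i : Set X)))).toReal *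
        Real.log (μ (⋂ i : Fin n, f^[(i : ℕ)] ⁻¹' ((w i : Set X)))).toReal

/-- The Kolmogorov–Sinai entropy `h_μ(f)`, as an extended real:
`sup_ξ lim_n H(μ, ξ^n)/n`. -/
noncomputable def ksEntropy (f : X → X) (μ : Measure X) : EReal :=
  ⨆ (s : Finset (Set X)) (_ : IsFinPartition s),
    Filter.atTop.liminf (fun n : ℕ => ((dynH f μ s n / n : ℝ) : EReal))

end Entropy

section Pressure

variable [MetricSpace X] [MeasurableSpace X]

/-- Brin–Katok local entropy `h_μ(x) = lim_{ε→0} liminf_n -(1/n) log μ(B_n(x,ε))`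
(the limit in `ε` being a supremum by monotonicity). -/
noncomputable def localEntropy (f : X → X) (μ : Measure X) (x : X) : EReal :=
  ⨆ (ε : ℝ) (_ : 0 < ε),
    Filter.atTop.liminf (fun n : ℕ =>
      (((n : ℝ)⁻¹ : ℝ) : EReal) * (-(μ (bowenBall f x n ε)).log))

/-- The point-wise measure theoretic pressure
`P_μ(f,φ,x) = lim_{ε→0} liminf_n (1/n)[-log μ(B_n(x,ε)) + S_nφ(x)]`. -/
noncomputable def ptPressure (f : X → X) (φ : X → ℝ) (μ : Measure X) (x : X) : EReal :=
  ⨆ (ε : ℝ) (_ : 0 < ε),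
    Filter.atTop.liminf (fun n : ℕ =>
      (((n : ℝ)⁻¹ : ℝ) : EReal) * (-(μ (bowenBall f x n ε)).log + ((birk f φ n x : ℝ) : EReal)))

/-- `M(Z,φ,α,N,ε)`: infimum of `∑_i exp(-α n_i + S_{n_i}φ(x_i))` over countable covers
of `Z` by Bowen balls `B_{n_i}(x_i,ε)` with `n_i ≥ N`. -/
noncomputable def Mcov (f : X → X) (φ : X → ℝ) (Z : Set X) (α : ℝ) (N : ℕ) (ε : ℝ) : ℝ≥0∞ :=
  ⨅ (c : ℕ → X × ℕ)
    (_ : (∀ i, N ≤ (c i).2) ∧ Z ⊆ ⋃ i, bowenBall f (c i).1 (c i).2 ε),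
      ∑' i, ENNReal.ofReal (Real.exp (-α * ((c i).2 : ℝ) + birk f φ (c i).2 (c i).1))

/-- `m(Z,φ,α,ε) = lim_{N→∞} M(Z,φ,α,N,ε)` (a supremum, by monotonicity in `N`). -/
noncomputable def mZ (f : X → X) (φ : X → ℝ) (Z : Set X) (α : ℝ) (ε : ℝ) : ℝ≥0∞ :=
  ⨆ N : ℕ, Mcov f φ Z α N ε

/-- `P_Z(f,φ,ε) = inf {α : m(Z,φ,α,ε) = 0}`, the jump-up point of `α ↦ m(Z,φ,α,ε)`. -/
noncomputable def PZeps (f : X → X) (φ : X → ℝ) (Z : Set X) (ε : ℝ) : EReal :=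
  ⨅ (α : ℝ) (_ : mZ f φ Z α ε = 0), ((α : ℝ) : EReal)

/-- The topological pressure `P_Z(f,φ) = lim_{ε→0} P_Z(f,φ,ε)` on an arbitrary set `Z`
(the limit in `ε` being a supremum by monotonicity). -/
noncomputable def PZ (f : X → X) (φ : X → ℝ) (Z : Set X) : EReal :=
  ⨆ (ε : ℝ) (_ : 0 < ε), PZeps f φ Z ε

/-- The measure theoretic pressure
`P_μ(f,φ) = lim_{ε→0} inf {P_Z(f,φ,ε) : Z Borel, μ(Z) = 1}`. -/
noncomputable def Pmu (f : X → X) (φ : X → ℝ) (μ : Measure X) : EReal :=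
  ⨆ (ε : ℝ) (_ : 0 < ε),
    ⨅ (Z : Set X) (_ : MeasurableSet Z ∧ μ Z = 1), PZeps f φ Z ε

end Pressure

noncomputable instance {Y : Type*} [MeasurableSpace Y] [TopologicalSpace Y]
    [OpensMeasurableSpace Y] : MeasurableSpace (ProbabilityMeasure Y) := borel _

section Decomp

variable [MeasurableSpace X] [TopologicalSpace X] [OpensMeasurableSpace X]

/-- `τ` is an ergodic decomposition of the invariant measure `μ` (supported on `J`):
a Borel probability measure on the space `M(X)` of Borel probability measures with the
weak-star topology, giving full measure to the ergodic measures with full measure on `J`,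
and such that `∫ ψ dμ = ∫ (∫ ψ dν) dτ(ν)` for every `ψ ∈ L¹(μ)`. -/
def IsErgodicDecomp (f : X → X) (J : Set X) (μ : Measure X)
    (τ : Measure (ProbabilityMeasure X)) : Prop :=
  IsProbabilityMeasure τ ∧
  τ {ν : ProbabilityMeasure X | Ergodic f ν.toMeasure ∧ ν.toMeasure J = 1} = 1 ∧
  ∀ ψ : X → ℝ, Integrable ψ μ →
    ∫ x, ψ x ∂μ = ∫ ν : ProbabilityMeasure X, (∫ x, ψ x ∂ν.toMeasure) ∂τ

end Decomp

end Paper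

open Paper

/-! Both inequalities compare Birkhoff sums with code lengths. Fix a finite labelling of `X`. A
function `g` is a code cost if, up to an additive constant, its Birkhoff sums dominate the lengths
of codes for the words of labels, that is, if they satisfy Kraft's inequality.

For `h_μ(f) + ∫ φ dμ ≤ P_μ(f,φ)`, a cover of almost all of `X` by Bowen balls of small total weight
`∑ exp (-α n_i + S_{n_i} φ (x_i))` yields a code: parse the orbit into segments, each of which
follows some ball, and pay roughly `α n_i - S_{n_i} φ` for it. The resulting code cost is close to
`α - φ`, and Gibbs' inequality bounds the entropy by its integral.

For the other bound let `β > h_ν(f) + ∫ φ dν` with `ν` ergodic. Some rational code `r` of the words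
of some length `k` satisfies `∫ (φ + r / k - β) dν < 0`, so by ergodicity the Birkhoff sums of
`φ + r / k - β` are negative infinitely often, almost surely. By Kraft's inequality the points where
this happens have efficient covers by Bowen balls. There are only countably many rational codes, and
the union of these sets has full measure for every such `ν`, hence for `μ` if `β` exceeds the
essential supremum. -/

namespace Paper

section Words

variable {X A : Type*} {f : X → X} {π : X → A}

/-- The `n`-word (itinerary) of `x` with respect to the labelling `π`. -/
def word (f : X → X) (π : X → A) (n : ℕ) (x : X) : Fin n → A := fun i => π (f^[i] x)

lemma word_natAdd (l m : ℕ) (x : X) :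
    (fun j => word f π (l + m) x (Fin.natAdd l j)) = word f π m (f^[l] x) := by
  funext j
  simp only [word, Fin.val_natAdd, add_comm l, Function.iterate_add_apply]

variable [Fintype A]

/-- `u` is dominated by a function of the `n`-word of total mass at most `C`; up to the constant
`C`, this is the Kraft inequality for `-log u`. -/
def HasWordMass (f : X → X) (π : X → A) (n : ℕ) (u : X → ℝ) (C : ℝ) : Prop :=
  ∃ Q : (Fin n → A) → ℝ, (∀ w, 0 ≤ Q w) ∧ ∑ w, Q w ≤ C ∧ ∀ x, u x ≤ Q (word f π n x)

namespace HasWordMass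

variable {n l m : ℕ} {u v : X → ℝ} {C D : ℝ}

lemma mono (h : HasWordMass f π n u C) (huv : ∀ x, v x ≤ u x) (hCD : C ≤ D) :
    HasWordMass f π n v D := by
  obtain ⟨Q, hQ0, hQ, hu⟩ := h
  exact ⟨Q, hQ0, hQ.trans hCD, fun x => (huv x).trans (hu x)⟩

lemma nonneg (h : HasWordMass f π n u C) : 0 ≤ C := by
  obtain ⟨Q, hQ0, hQ, -⟩ := h
  exact (Finset.sum_nonneg fun w _ => hQ0 w).trans hQ

lemma const {c : ℝ} (hc : 0 ≤ c) :
    HasWordMass f π n (fun _ => c) (Fintype.card A ^ n * c) :=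
  ⟨fun _ => c, fun _ => hc, by simp, fun _ => le_rfl⟩

lemma sum {ι : Type*} [Fintype ι] {u : ι → X → ℝ} {C : ι → ℝ}
    (h : ∀ i, HasWordMass f π n (u i) (C i)) :
    HasWordMass f π n (fun x => ∑ i, u i x) (∑ i, C i) := by
  choose Q hQ0 hQ hu using h
  refine ⟨fun w => ∑ i, Q i w, fun w => Finset.sum_nonneg fun i _ => hQ0 i w, ?_,
    fun x => Finset.sum_le_sum fun i _ => hu i x⟩
  rw [Finset.sum_comm]
  exact Finset.sum_le_sum fun i _ => hQ i

lemma const_mul (h : HasWordMass f π n u C) {c : ℝ} (hc : 0 ≤ c) :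
    HasWordMass f π n (fun x => c * u x) (c * C) := by
  obtain ⟨Q, hQ0, hQ, hu⟩ := h
  refine ⟨fun w => c * Q w, fun w => mul_nonneg hc (hQ0 w), ?_,
    fun x => mul_le_mul_of_nonneg_left (hu x) hc⟩
  rw [← Finset.mul_sum]
  exact mul_le_mul_of_nonneg_left hQ hc

lemma mul (hu : HasWordMass f π l u C) (hv : HasWordMass f π m v D) (hv0 : ∀ x, 0 ≤ v x) :
    HasWordMass f π (l + m) (fun x => u x * v (f^[l] x)) (C * D) := by
  have hC := hu.nonneg
  obtain ⟨P, hP0, hP, hu⟩ := hu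
  obtain ⟨Q, hQ0, hQ, hv⟩ := hv
  refine ⟨fun w => P (fun j => w (Fin.castAdd m j)) * Q (fun j => w (Fin.natAdd l j)),
    fun w => mul_nonneg (hP0 _) (hQ0 _), ?_, fun x => ?_⟩
  · rw [← (Fin.appendEquiv l m).sum_comp, Fintype.sum_prod_type]
    simp only [Fin.appendEquiv_apply, Fin.append_left, Fin.append_right, ← Finset.mul_sum,
      ← Finset.sum_mul]
    gcongr
    exact Finset.sum_nonneg fun w _ => hQ0 w
  · beta_reduce
    rw [word_natAdd]
    exact mul_le_mul (hu x) (hv _) (hv0 _) (hP0 _)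

end HasWordMass

/-- Up to a constant, the Birkhoff sums `S_n g` are code lengths for the `n`-words. -/
def IsCodeCost (f : X → X) (π : X → A) (g : X → ℝ) : Prop :=
  ∃ C, ∀ n, HasWordMass f π n (fun x => Real.exp (-birkhoffSum f g n x)) C

end Words

section BlockCodes

variable {X A ι : Type*} [Fintype A] [Fintype ι] {f : X → X} {π : X → A}

lemma birkhoffSum_ge_of_le {g : X → ℝ} {b : ℝ} (hg : ∀ x, b ≤ g x) (n : ℕ) (x : X) :
    n * b ≤ birkhoffSum f g n x := by
  have := Finset.card_nsmul_le_sum (Finset.range n) (fun i => g (f^[i] x)) b fun i _ => hg _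
  simpa only [birkhoffSum, Finset.card_range, nsmul_eq_mul] using this

/-- Parsing an orbit into blocks, each chosen among finitely many kinds `i` of length `l i` and
charged at most `g` along the block, encodes it at cost `g`. -/
theorem isCodeCost_of_blocks {l : ι → ℕ} (hl : ∀ i, 0 < l i) {u : ι → X → ℝ} {c : ι → ℝ}
    (hu : ∀ i, HasWordMass f π (l i) (u i) (c i)) (hu0 : ∀ i x, 0 ≤ u i x) (hc : ∑ i, c i ≤ 1)
    {g : X → ℝ} {b : ℝ} (hgb : ∀ x, b ≤ g x)
    (hg : ∀ x, ∃ i, Real.exp (-birkhoffSum f g (l i) x) ≤ u i x) : IsCodeCost f π g := by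
  set L := ∑ i, l i
  have hlL i : l i ≤ L := Finset.single_le_sum (fun _ _ => Nat.zero_le _) (Finset.mem_univ i)
  have short n (hn : n < L) : HasWordMass f π n (fun x => Real.exp (-birkhoffSum f g n x))
      (∑ m ∈ Finset.range L, Fintype.card A ^ m * Real.exp (-(m * b))) :=
    (HasWordMass.const (Real.exp_nonneg (-(n * b)))).mono
      (fun x => Real.exp_le_exp.2 (neg_le_neg (birkhoffSum_ge_of_le hgb n x)))
      (Finset.single_le_sum (f := fun m : ℕ => (Fintype.card A : ℝ) ^ m * Real.exp (-(m * b)))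
        (fun _ _ => by positivity) (Finset.mem_range.2 hn))
  set C := ∑ m ∈ Finset.range L, (Fintype.card A : ℝ) ^ m * Real.exp (-(m * b))
  have hC : 0 ≤ C := Finset.sum_nonneg fun _ _ => by positivity
  refine ⟨C, fun n => ?_⟩
  induction n using Nat.strong_induction_on with
  | _ n ih =>
  obtain hn | hn := lt_or_ge n L
  · exact short n hn
  have step i : HasWordMass f π n
      (fun x => u i x * Real.exp (-birkhoffSum f g (n - l i) (f^[l i] x))) (c i * C) := by
    have := (hu i).mul (ih (n - l i) (Nat.sub_lt ((hl i).trans_le ((hlL i).trans hn)) (hl i)))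
      fun _ => Real.exp_nonneg _
    rwa [Nat.add_sub_cancel' ((hlL i).trans hn)] at this
  refine (HasWordMass.sum step).mono (fun x => ?_) ?_
  · obtain ⟨i, hi⟩ := hg x
    calc Real.exp (-birkhoffSum f g n x)
        = Real.exp (-birkhoffSum f g (l i) x)
            * Real.exp (-birkhoffSum f g (n - l i) (f^[l i] x)) := by
          rw [← Real.exp_add, ← neg_add, ← birkhoffSum_add,
            Nat.add_sub_cancel' ((hlL i).trans hn)]
      _ ≤ u i x * Real.exp (-birkhoffSum f g (n - l i) (f^[l i] x)) := by gcongr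
      _ ≤ _ := Finset.single_le_sum
          (f := fun i => u i x * Real.exp (-birkhoffSum f g (n - l i) (f^[l i] x)))
          (fun i _ => mul_nonneg (hu0 i x) (Real.exp_nonneg _)) (Finset.mem_univ i)
  · rw [← Finset.sum_mul]
    exact mul_le_of_le_one_left hC hc

theorem isCodeCost_of_blocks_or_letters [Nonempty A] {l : ι → ℕ} (hl : ∀ i, 0 < l i)
    {u : ι → X → ℝ} {c : ι → ℝ} (hu : ∀ i, HasWordMass f π (l i) (u i) (c i))
    (hu0 : ∀ i x, 0 ≤ u i x) (hc : ∑ i, c i ≤ 1 / 2) {g : X → ℝ} {b : ℝ} (hgb : ∀ x, b ≤ g x)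
    (hg : ∀ x, (∃ i, Real.exp (-birkhoffSum f g (l i) x) ≤ u i x) ∨
      Real.log (2 * Fintype.card A) ≤ g x) : IsCodeCost f π g := by
  have card_pos : (0 : ℝ) < Fintype.card A := by exact_mod_cast Fintype.card_pos
  refine isCodeCost_of_blocks (l := fun i : Option ι => i.elim 1 l)
    (u := fun i => i.elim (fun _ => 1 / (2 * Fintype.card A)) u)
    (c := fun i => i.elim (1 / 2) c) ?_ ?_ ?_ ?_ hgb fun x => ?_
  · rintro (_ | i)
    exacts [one_pos, hl i]
  · rintro (_ | i)
    · refine (HasWordMass.const (c := 1 / (2 * Fintype.card A)) (by positivity)).mono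
        (fun _ => le_rfl) (le_of_eq ?_)
      change (Fintype.card A : ℝ) ^ 1 * (1 / (2 * Fintype.card A)) = 1 / 2
      field_simp
    · exact hu i
  · rintro (_ | i) x
    exacts [by simp only [Option.elim]; positivity, hu0 i x]
  · rw [Fintype.sum_option]
    simp only [Option.elim]
    linarith
  · obtain ⟨i, hi⟩ | hx := hg x
    · exact ⟨some i, hi⟩
    · refine ⟨none, ?_⟩
      simp only [Option.elim, birkhoffSum_one]
      rw [one_div, ← Real.exp_log (inv_pos.2 (mul_pos two_pos card_pos)), Real.log_inv]
      exact Real.exp_le_exp.2 (neg_le_neg hx)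

end BlockCodes

/-- Gibbs' inequality. -/
lemma sum_negMulLog_le_sum_mul_neg_log {W : Type*} [Fintype W] {p Q : W → ℝ} {C : ℝ}
    (hp0 : ∀ w, 0 ≤ p w) (hp : ∑ w, p w = 1) (hQ0 : ∀ w, 0 ≤ Q w) (hQ : ∑ w, Q w ≤ C)
    (hpQ : ∀ w, p w ≠ 0 → 0 < Q w) :
    ∑ w, Real.negMulLog (p w) ≤ ∑ w, p w * -Real.log (Q w) + Real.log C := by
  obtain ⟨w₀, -, hw₀⟩ : ∃ w ∈ Finset.univ, p w ≠ 0 :=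
    Finset.exists_ne_zero_of_sum_ne_zero (hp.trans_ne one_ne_zero)
  have hC : 0 < C :=
    (hpQ w₀ hw₀).trans_le ((Finset.single_le_sum (fun w _ => hQ0 w) (Finset.mem_univ w₀)).trans hQ)
  have pointwise w : Real.negMulLog (p w) ≤ p w * -Real.log (Q w) + p w * Real.log C
      + (Q w / C - p w) := by
    obtain h | h := eq_or_ne (p w) 0
    · simp only [h, Real.negMulLog_zero, zero_mul, zero_add, sub_zero]
      exact div_nonneg (hQ0 w) hC.le
    · have hpw : 0 < p w := (hp0 w).lt_of_ne' h
      have hlog := Real.log_le_sub_one_of_pos (div_pos (hpQ w h) (mul_pos hC hpw))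
      rw [Real.log_div (hpQ w h).ne' (mul_pos hC hpw).ne', Real.log_mul hC.ne' h] at hlog
      have hmul := mul_le_mul_of_nonneg_left hlog hpw.le
      have hcancel : p w * (Q w / (C * p w) - 1) = Q w / C - p w := by field_simp
      rw [hcancel] at hmul
      rw [Real.negMulLog]
      linarith
  calc ∑ w, Real.negMulLog (p w)
      ≤ ∑ w, (p w * -Real.log (Q w) + p w * Real.log C + (Q w / C - p w)) :=
        Finset.sum_le_sum fun w _ => pointwise w
    _ = ∑ w, p w * -Real.log (Q w) + Real.log C + ((∑ w, Q w) / C - 1) := by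
        rw [Finset.sum_add_distrib, Finset.sum_add_distrib, Finset.sum_sub_distrib,
          ← Finset.sum_mul, hp, one_mul, Finset.sum_div]
    _ ≤ _ := by linarith [(div_le_one hC).2 hQ]

section WordMeasurability

variable {X A : Type*} [MeasurableSpace X] [Finite A] {f : X → X} {π : X → A}

lemma measurableSet_preimage_word (hf : Measurable f)
    (hπ : ∀ a, MeasurableSet (π ⁻¹' {a})) (n : ℕ) (S : Set (Fin n → A)) :
    MeasurableSet (word f π n ⁻¹' S) := by
  have cylinder (w : Fin n → A) : MeasurableSet (word f π n ⁻¹' {w}) := by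
    have : word f π n ⁻¹' {w} = ⋂ i : Fin n, f^[i] ⁻¹' (π ⁻¹' {w i}) := by
      ext x
      simp only [mem_preimage, mem_singleton_iff, mem_iInter, funext_iff, word]
    rw [this]
    exact .iInter fun i => hf.iterate i (hπ (w i))
  rw [← biUnion_preimage_singleton]
  exact .biUnion S.to_countable fun w _ => cylinder w

lemma measurable_comp_word {β : Type*} [MeasurableSpace β] (hf : Measurable f)
    (hπ : ∀ a, MeasurableSet (π ⁻¹' {a})) (n : ℕ) (F : (Fin n → A) → β) :
    Measurable (fun x => F (word f π n x)) :=
  fun S _ => measurableSet_preimage_word hf hπ n (F ⁻¹' S)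

lemma integrable_comp_word (hf : Measurable f) (hπ : ∀ a, MeasurableSet (π ⁻¹' {a}))
    (μ : Measure X) [IsFiniteMeasure μ] (n : ℕ) (F : (Fin n → A) → ℝ) :
    Integrable (fun x => F (word f π n x)) μ :=
  .of_bound (measurable_comp_word hf hπ n F).aestronglyMeasurable (⨆ w, ‖F w‖)
    (ae_of_all _ fun x => le_ciSup (f := fun w => ‖F w‖) (finite_range _).bddAbove (word f π n x))

end WordMeasurability

section WordEntropy

variable {X A : Type*} [MeasurableSpace X] [Fintype A] {f : X → X} {π : X → A}

/-- The Shannon entropy of the distribution of `n`-words under `μ`. -/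
noncomputable def wordEntropy (f : X → X) (π : X → A) (μ : Measure X) (n : ℕ) : ℝ :=
  ∑ w, Real.negMulLog (μ.real (word f π n ⁻¹' {w}))

lemma integral_comp_word (hf : Measurable f) (hπ : ∀ a, MeasurableSet (π ⁻¹' {a}))
    (μ : Measure X) [IsFiniteMeasure μ] (n : ℕ) (F : (Fin n → A) → ℝ) :
    ∫ x, F (word f π n x) ∂μ = ∑ w, μ.real (word f π n ⁻¹' {w}) * F w := by
  let _ : MeasurableSpace (Fin n → A) := ⊤
  have hword : Measurable (word f π n) := measurable_comp_word hf hπ n id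
  rw [← integral_map hword.aemeasurable (measurable_of_countable F).aestronglyMeasurable,
    integral_fintype .of_finite]
  simp only [map_measureReal_apply hword (measurableSet_singleton _), smul_eq_mul]

lemma sum_measureReal_word (hf : Measurable f) (hπ : ∀ a, MeasurableSet (π ⁻¹' {a}))
    (μ : Measure X) [IsProbabilityMeasure μ] (n : ℕ) :
    ∑ w, μ.real (word f π n ⁻¹' {w}) = 1 := by
  simpa using (integral_comp_word hf hπ μ n fun _ => 1).symm

lemma wordEntropy_le_integral_neg_log (hf : Measurable f) (hπ : ∀ a, MeasurableSet (π ⁻¹' {a}))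
    {μ : Measure X} [IsProbabilityMeasure μ] {n : ℕ} {u : X → ℝ} {C : ℝ}
    (hu : HasWordMass f π n u C) (hu0 : ∀ x, 0 < u x)
    (hint : Integrable (fun x => -Real.log (u x)) μ) :
    wordEntropy f π μ n ≤ ∫ x, -Real.log (u x) ∂μ + Real.log C := by
  obtain ⟨Q, hQ0, hQ, huQ⟩ := hu
  calc wordEntropy f π μ n
      ≤ ∑ w, μ.real (word f π n ⁻¹' {w}) * -Real.log (Q w) + Real.log C :=
        sum_negMulLog_le_sum_mul_neg_log (fun _ => measureReal_nonneg)
          (sum_measureReal_word hf hπ μ n) hQ0 hQ fun w hw => by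
            obtain ⟨x, rfl⟩ := nonempty_of_measureReal_ne_zero hw
            exact (hu0 x).trans_le (huQ x)
    _ = ∫ x, -Real.log (Q (word f π n x)) ∂μ + Real.log C := by
        rw [integral_comp_word hf hπ μ n fun w => -Real.log (Q w)]
    _ ≤ _ := by
        gcongr ?_ + _
        exact integral_mono (integrable_comp_word hf hπ μ n fun w => -Real.log (Q w)) hint
          fun x => neg_le_neg (Real.log_le_log (hu0 x) (huQ x))

end WordEntropy

section Invariant

variable {X A : Type*} [MeasurableSpace X] [Fintype A] {f : X → X} {π : X → A} {μ : Measure X}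

lemma integrable_birkhoffSum (hμ : MeasurePreserving f μ μ) {g : X → ℝ} (hg : Integrable g μ)
    (n : ℕ) : Integrable (birkhoffSum f g n) μ :=
  integrable_finsetSum _ fun i _ => (hμ.iterate i).integrable_comp_of_integrable hg

lemma integral_birkhoffSum (hμ : MeasurePreserving f μ μ) {g : X → ℝ} (hg : Integrable g μ)
    (n : ℕ) : ∫ x, birkhoffSum f g n x ∂μ = n * ∫ x, g x ∂μ := by
  have iterate (i : ℕ) : ∫ x, g (f^[i] x) ∂μ = ∫ x, g x ∂μ := by
    have hi := hμ.iterate i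
    nth_rw 2 [← hi.map_eq]
    exact (integral_map hi.measurable.aemeasurable
      (by rw [hi.map_eq]; exact hg.aestronglyMeasurable)).symm
  simp only [birkhoffSum]
  rw [integral_finsetSum (f := fun i x => g (f^[i] x)) _ fun i _ =>
    (hμ.iterate i).integrable_comp_of_integrable hg]
  simp only [iterate, Finset.sum_const, Finset.card_range, nsmul_eq_mul]

theorem IsCodeCost.liminf_wordEntropy_le [IsProbabilityMeasure μ] (hμ : MeasurePreserving f μ μ)
    (hπ : ∀ a, MeasurableSet (π ⁻¹' {a})) {g : X → ℝ} (hg : IsCodeCost f π g)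
    (hint : Integrable g μ) :
    liminf (fun n : ℕ => ((wordEntropy f π μ n / n : ℝ) : EReal)) atTop ≤
      ((∫ x, g x ∂μ : ℝ) : EReal) := by
  obtain ⟨C, hC⟩ := hg
  have bound n : wordEntropy f π μ n ≤ n * ∫ x, g x ∂μ + Real.log C := by
    have h := wordEntropy_le_integral_neg_log hμ.measurable hπ (hC n) (fun _ => Real.exp_pos _)
      (by simpa only [Real.log_exp, neg_neg] using integrable_birkhoffSum hμ hint n)
    simpa only [Real.log_exp, neg_neg, integral_birkhoffSum hμ hint n] using h
  have lim : Tendsto (fun n : ℕ => ((∫ x, g x ∂μ + Real.log C / n : ℝ) : EReal)) atTop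
      (nhds ((∫ x, g x ∂μ : ℝ) : EReal)) := by
    refine (continuous_coe_real_ereal.tendsto _).comp ?_
    simpa using tendsto_const_nhds.add (tendsto_const_div_atTop_nhds_zero_nat (Real.log C))
  rw [← lim.liminf_eq]
  refine liminf_le_liminf (eventually_atTop.2 ⟨1, fun n hn => EReal.coe_le_coe_iff.2 ?_⟩)
  have hn : (0 : ℝ) < n := by exact_mod_cast hn
  rw [div_le_iff₀ hn, add_mul, div_mul_cancel₀ _ hn.ne']
  linarith [bound n]

end Invariant

section Partitions

variable {X : Type*} [MeasurableSpace X] {s : Finset (Set X)}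

namespace IsFinPartition

lemma exists_mem (hs : IsFinPartition s) (x : X) : ∃ A : {A // A ∈ s}, x ∈ A.1 := by
  obtain ⟨A, hA, hx⟩ := mem_sUnion.1 (hs.2.1.ge (mem_univ x))
  exact ⟨⟨A, hA⟩, hx⟩

/-- The element of the partition containing a given point. -/
noncomputable def label (hs : IsFinPartition s) (x : X) : {A // A ∈ s} :=
  (hs.exists_mem x).choose

lemma mem_label (hs : IsFinPartition s) (x : X) : x ∈ (hs.label x).1 :=
  (hs.exists_mem x).choose_spec

lemma label_eq_iff (hs : IsFinPartition s) {x : X} {A : {A // A ∈ s}} :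
    hs.label x = A ↔ x ∈ A.1 := by
  refine ⟨fun h => h ▸ hs.mem_label x, fun hx => by_contra fun h => ?_⟩
  exact disjoint_left.1 (hs.2.2 (hs.label x).2 A.2 (Subtype.coe_ne_coe.2 h)) (hs.mem_label x) hx

lemma measurableSet_label_preimage (hs : IsFinPartition s) (A : {A // A ∈ s}) :
    MeasurableSet (hs.label ⁻¹' {A}) := by
  have : hs.label ⁻¹' {A} = A.1 := ext fun x => hs.label_eq_iff
  rw [this]
  exact hs.1 A.1 A.2

lemma dynH_eq_wordEntropy (hs : IsFinPartition s) (f : X → X) (μ : Measure X) (n : ℕ) :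
    dynH f μ s n = wordEntropy f hs.label μ n := by
  have cylinder (w : Fin n → {A // A ∈ s}) :
      word f hs.label n ⁻¹' {w} = ⋂ i : Fin n, f^[(i : ℕ)] ⁻¹' (w i : Set X) := by
    ext x
    simp only [mem_preimage, mem_singleton_iff, funext_iff, word, hs.label_eq_iff, mem_iInter]
  simp only [dynH, wordEntropy, cylinder, Real.negMulLog, Measure.real, neg_mul,
    Finset.sum_neg_distrib]

end IsFinPartition

lemma ksEntropy_eq_iSup_wordEntropy (f : X → X) (μ : Measure X) :
    ksEntropy f μ = ⨆ (s : Finset (Set X)) (hs : IsFinPartition s),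
      liminf (fun n : ℕ => ((wordEntropy f hs.label μ n / n : ℝ) : EReal)) atTop :=
  iSup_congr fun _ => iSup_congr fun hs => by simp only [hs.dynH_eq_wordEntropy]

open Classical in
lemma isFinPartition_simpleFunc {β : Type*} (g : SimpleFunc X β) :
    IsFinPartition (g.range.image fun y => g ⁻¹' {y}) := by
  refine ⟨?_, eq_univ_of_forall fun x => ?_, ?_⟩
  · simp only [Finset.mem_image]
    rintro _ ⟨y, -, rfl⟩
    exact g.measurableSet_fiber y
  · exact ⟨g ⁻¹' {g x}, Finset.mem_image_of_mem _ (g.mem_range_self x), rfl⟩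
  · simp only [Finset.coe_image]
    rintro _ ⟨y, -, rfl⟩ _ ⟨z, -, rfl⟩ hyz
    exact Disjoint.preimage g (disjoint_singleton.2 fun h => hyz (by rw [h]))

end Partitions

lemma exists_isFinPartition_dist_lt {X : Type*} [PseudoMetricSpace X] [CompactSpace X]
    [MeasurableSpace X] [OpensMeasurableSpace X] {ε : ℝ} (hε : 0 < ε) :
    ∃ (s : Finset (Set X)) (hs : IsFinPartition s),
      ∀ x y, hs.label x = hs.label y → dist x y < ε := by
  classical
  cases isEmpty_or_nonempty X
  · exact ⟨_, isFinPartition_simpleFunc (SimpleFunc.const X ()), fun x => isEmptyElim x⟩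
  set e := TopologicalSpace.denseSeq X
  obtain ⟨t, ht⟩ := isCompact_univ.elim_finite_subcover (fun n => Metric.ball (e n) (ε / 2))
    (fun _ => Metric.isOpen_ball) fun x _ => by
      obtain ⟨n, hn⟩ :=
        (TopologicalSpace.denseRange_denseSeq X).exists_dist_lt x (half_pos hε)
      exact mem_iUnion.2 ⟨n, hn⟩
  set g := SimpleFunc.nearestPt e (t.sup id)
  have near (x : X) : dist (g x) x < ε / 2 := by
    obtain ⟨n, hnt, hn⟩ := mem_iUnion₂.1 (ht (mem_univ x))
    have := SimpleFunc.edist_nearestPt_le e x (Finset.le_sup (f := id) hnt)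
    rw [edist_dist, edist_dist, ENNReal.ofReal_le_ofReal_iff dist_nonneg] at this
    exact this.trans_lt (Metric.mem_ball'.1 hn)
  refine ⟨_, isFinPartition_simpleFunc g, fun x y hxy => ?_⟩
  obtain ⟨z, -, hz⟩ := Finset.mem_image.1 ((isFinPartition_simpleFunc g).label y).2
  have hx : g x = z := hz.ge ((isFinPartition_simpleFunc g).label_eq_iff.1 hxy)
  have hy : g y = z := hz.ge ((isFinPartition_simpleFunc g).mem_label y)
  calc dist x y ≤ dist (g x) x + dist (g x) y := dist_triangle_left x y _
    _ < ε / 2 + ε / 2 := add_lt_add (near x) (by rw [hx, ← hy]; exact near y)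
    _ = ε := add_halves ε

section CoverSums

variable {X : Type*} [MetricSpace X] {f : X → X} {φ : X → ℝ} {Z : Set X}
  {α ε : ℝ} {N : ℕ}

/-- The weight `exp(-α n + S_nφ(x))` of the Bowen ball `B_n(x, ε)`, for `p = (x, n)`, in the cover
sums `M(Z,φ,α,N,ε)`. -/
noncomputable def ballWeight (f : X → X) (φ : X → ℝ) (α : ℝ) (p : X × ℕ) : ℝ≥0∞ :=
  ENNReal.ofReal (Real.exp (-α * p.2 + birk f φ p.2 p.1))

-- `Mcov` ranges over covers indexed by all of `ℕ`, and there may be no ball of small weight to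
-- pad a finite cover with: hence `Infinite ι`, and the nonemptiness assumptions further on.
lemma Mcov_le_tsum {ι : Type*} [Countable ι] [Infinite ι] (c : ι → X × ℕ)
    (hN : ∀ i, N ≤ (c i).2) (hZ : Z ⊆ ⋃ i, bowenBall f (c i).1 (c i).2 ε) :
    Mcov f φ Z α N ε ≤ ∑' i, ballWeight f φ α (c i) := by
  obtain ⟨_⟩ := nonempty_denumerable ι
  let e := (Denumerable.eqv ι).symm
  rw [← e.tsum_eq]
  exact iInf₂_le (f := fun (c : ℕ → X × ℕ) (_ : (∀ i, N ≤ (c i).2) ∧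
    Z ⊆ ⋃ i, bowenBall f (c i).1 (c i).2 ε) => ∑' i, ballWeight f φ α (c i)) (c ∘ e)
    ⟨fun n => hN (e n),
      hZ.trans (e.surjective.iUnion_comp fun i => bowenBall f (c i).1 (c i).2 ε).ge⟩

lemma mZ_eq_zero_iff : mZ f φ Z α ε = 0 ↔ ∀ (N : ℕ) (δ : ℝ≥0∞), 0 < δ →
    ∃ c : ℕ → X × ℕ, (∀ i, N ≤ (c i).2) ∧ Z ⊆ ⋃ i, bowenBall f (c i).1 (c i).2 ε ∧
      ∑' i, ballWeight f φ α (c i) < δ := by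
  rw [mZ, ENNReal.iSup_eq_zero]
  refine forall_congr' fun N => ⟨fun h δ hδ => ?_, fun h => ?_⟩
  · rw [← h] at hδ
    simpa only [Mcov, ballWeight, iInf_lt_iff, exists_prop, and_assoc] using hδ
  · refine nonpos_iff_eq_zero.1 (le_of_forall_gt_imp_ge_of_dense fun δ hδ => ?_)
    obtain ⟨c, hcN, hcZ, hc⟩ := h δ hδ
    exact (Mcov_le_tsum c hcN hcZ).trans hc.le

lemma mZ_iUnion_eq_zero {ι : Type*} [Countable ι] {Z : ι → Set X}
    (h : ∀ i, (Z i).Nonempty → mZ f φ (Z i) α ε = 0) (hZ : (⋃ i, Z i).Nonempty) :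
    mZ f φ (⋃ i, Z i) α ε = 0 := by
  let ι' := {i // (Z i).Nonempty}
  have : Nonempty ι' := by
    obtain ⟨x, hx⟩ := hZ
    obtain ⟨i, hi⟩ := mem_iUnion.1 hx
    exact ⟨i, x, hi⟩
  rw [mZ, ENNReal.iSup_eq_zero]
  refine fun N => nonpos_iff_eq_zero.1 (le_of_forall_gt_imp_ge_of_dense fun δ hδ => ?_)
  obtain ⟨d, hd0, hd⟩ := ENNReal.exists_pos_sum_of_countable' hδ.ne' ι'
  choose c hcN hcZ hc using fun i : ι' => mZ_eq_zero_iff.1 (h i i.2) N (d i) (hd0 i)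
  calc Mcov f φ (⋃ i, Z i) α N ε ≤ ∑' p : ι' × ℕ, ballWeight f φ α (c p.1 p.2) := by
        refine Mcov_le_tsum (fun p : ι' × ℕ => c p.1 p.2) (fun p => hcN _ _)
          (iUnion_subset fun i x hx => ?_)
        obtain ⟨n, hn⟩ := mem_iUnion.1 (hcZ ⟨i, x, hx⟩ hx)
        exact mem_iUnion.2 ⟨(⟨i, x, hx⟩, n), hn⟩
    _ = ∑' i, ∑' n, ballWeight f φ α (c i n) :=
        ENNReal.tsum_prod (f := fun i n => ballWeight f φ α (c i n))
    _ ≤ ∑' i, d i := ENNReal.tsum_le_tsum fun i => (hc i).le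
    _ ≤ δ := hd.le

/-- A Borel–Cantelli argument: the tails of a convergent series of covers cover the limsup. -/
lemma mZ_frequently_mem_eq_zero {J : ℕ → Type*} [∀ n, Countable (J n)] {E : ℕ → Set X}
    {c : ∀ n, J n → X} (hE : ∀ n, E n ⊆ ⋃ j, bowenBall f (c n j) n ε)
    (hsum : ∑' n, ∑' j, ballWeight f φ α (c n j, n) ≠ ∞)
    (hne : {x | ∃ᶠ n in atTop, x ∈ E n}.Nonempty) :
    mZ f φ {x | ∃ᶠ n in atTop, x ∈ E n} α ε = 0 := by
  have tail_frequently {p : ℕ → Prop} (h : ∃ᶠ n in atTop, p n) (M : ℕ) :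
      ∃ᶠ n in atTop, p (n + M) := by
    rwa [← map_add_atTop_eq_nat M, frequently_map] at h
  rw [mZ, ENNReal.iSup_eq_zero]
  refine fun N => nonpos_iff_eq_zero.1 <|
    ge_of_tendsto (ENNReal.tendsto_sum_nat_add _ hsum) (eventually_atTop.2 ⟨N, fun M hM => ?_⟩)
  have : Infinite (Σ n, J (n + M)) := by
    obtain ⟨x, hx⟩ := hne
    have : Infinite {n // x ∈ E (n + M)} :=
      (Nat.frequently_atTop_iff_infinite.1 (tail_frequently hx M)).to_subtype
    choose j _ using fun n : {n // x ∈ E (n + M)} => mem_iUnion.1 (hE _ n.2)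
    exact .of_injective (fun n : {n // x ∈ E (n + M)} => (⟨n, j n⟩ : Σ n, J (n + M)))
      fun a b hab => Subtype.ext (congrArg Sigma.fst hab)
  rw [← ENNReal.tsum_sigma' (f := fun p : Σ n, J (n + M) => ballWeight f φ α (c _ p.2, p.1 + M))]
  refine Mcov_le_tsum (fun p : Σ n, J (n + M) => (c _ p.2, p.1 + M))
    (fun p => hM.trans (Nat.le_add_left _ _)) fun x hx => ?_
  obtain ⟨n, hn⟩ := (tail_frequently hx M).exists
  obtain ⟨j, hj⟩ := mem_iUnion.1 (hE _ hn)
  exact mem_iUnion.2 ⟨⟨n, j⟩, hj⟩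

lemma PZeps_antitone (f : X → X) (φ : X → ℝ) (Z : Set X) : Antitone (PZeps f φ Z) := by
  refine fun ε ε' h => le_iInf₂ fun α hα => iInf₂_le α ?_
  rw [mZ_eq_zero_iff] at hα ⊢
  intro N δ hδ
  obtain ⟨c, hcN, hcZ, hc⟩ := hα N δ hδ
  exact ⟨c, hcN, hcZ.trans (iUnion_mono fun _ _ hy i hi => (hy i hi).trans_le h), hc⟩

end CoverSums

section BallCodes

variable {X A : Type*} [MetricSpace X] [Fintype A] {f : X → X} {π : X → A} {ε : ℝ}

lemma hasWordMass_bowenBall {W : X → A → ℝ} (hW0 : ∀ c a, 0 ≤ W c a)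
    (hW : ∀ c, ∑ a, W c a ≤ 1) {v : X → ℝ}
    (hv : ∀ c y, dist c y < ε → Real.exp (-v y) ≤ W c (π y)) (c : X) (n : ℕ) :
    HasWordMass f π n
      ((bowenBall f c n ε).indicator fun x => Real.exp (-birkhoffSum f v n x)) 1 := by
  refine ⟨fun w => ∏ j : Fin n, W (f^[j] c) (w j),
    fun w => Finset.prod_nonneg fun j _ => hW0 _ _, ?_, fun x => ?_⟩
  · calc ∑ w : Fin n → A, ∏ j : Fin n, W (f^[j] c) (w j)
        = ∏ j : Fin n, ∑ a, W (f^[j] c) a := by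
          rw [Finset.prod_univ_sum, Fintype.piFinset_univ]
      _ ≤ 1 := Finset.prod_le_one (fun j _ => Finset.sum_nonneg fun a _ => hW0 _ a)
          fun j _ => hW _
  · refine indicator_apply_le' (fun hx => ?_) fun _ => Finset.prod_nonneg fun j _ => hW0 _ _
    rw [birkhoffSum, ← Finset.sum_neg_distrib, Real.exp_sum, Finset.prod_range]
    exact Finset.prod_le_prod (fun j _ => Real.exp_nonneg _) fun j _ => hv _ _ (hx j j.2)

lemma le_birkhoffSum_of_mem_bowenBall {φ g v : X → ℝ} {α κ : ℝ}
    (hφ : ∀ c y, dist c y < ε → φ y ≤ φ c + κ)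
    (hg : ∀ x, α - φ x + κ + v x ≤ g x) {c x : X} {n : ℕ} (hx : x ∈ bowenBall f c n ε) :
    α * n - birkhoffSum f φ n c + birkhoffSum f v n x ≤ birkhoffSum f g n x := by
  have hα : α * n = ∑ _i ∈ Finset.range n, α := by
    rw [Finset.sum_const, Finset.card_range, nsmul_eq_mul, mul_comm]
  rw [hα, birkhoffSum, birkhoffSum, birkhoffSum, ← Finset.sum_sub_distrib,
    ← Finset.sum_add_distrib]
  refine Finset.sum_le_sum fun i hi => ?_
  linarith [hφ _ _ (hx i (Finset.mem_range.1 hi)), hg (f^[i] x)]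

/-- An orbit is parsed into segments shadowing the centre of a ball, and single letters. -/
theorem isCodeCost_of_bowenBall_cover [Nonempty A] {W : X → A → ℝ} (hW0 : ∀ c a, 0 ≤ W c a)
    (hW : ∀ c, ∑ a, W c a ≤ 1) {v : X → ℝ} (hv0 : ∀ x, 0 ≤ v x)
    (hv : ∀ c y, dist c y < ε → Real.exp (-v y) ≤ W c (π y)) {φ : X → ℝ} {α κ B : ℝ}
    (hφ : ∀ c y, dist c y < ε → φ y ≤ φ c + κ) (hκ : 0 ≤ κ) (hφB : ∀ x, |φ x| ≤ B)
    {ι : Type*} [Fintype ι] (p : ι → X × ℕ) (hp : ∀ i, 0 < (p i).2)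
    (hq : ∑ i, Real.exp (-α * (p i).2 + birkhoffSum f φ (p i).2 (p i).1) ≤ 1 / 2) :
    IsCodeCost f π fun x => α - φ x + κ + v x +
      (⋃ i, bowenBall f (p i).1 (p i).2 ε)ᶜ.indicator
        (fun _ => Real.log (2 * Fintype.card A) + |α| + B) x := by
  set K := Real.log (2 * Fintype.card A) + |α| + B
  set D := (⋃ i, bowenBall f (p i).1 (p i).2 ε)ᶜ
  have ind_nonneg (x : X) : 0 ≤ D.indicator (fun _ => K) x := by
    have hB := (abs_nonneg _).trans (hφB x)
    have hlog : 0 ≤ Real.log (2 * Fintype.card A) := by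
      exact_mod_cast Real.log_natCast_nonneg (2 * Fintype.card A)
    exact indicator_nonneg (fun _ _ => by positivity) x
  refine isCodeCost_of_blocks_or_letters (b := -(|α| + B)) hp
    (fun i => (hasWordMass_bowenBall hW0 hW hv (p i).1 _).const_mul (Real.exp_nonneg
      (-α * (p i).2 + birkhoffSum f φ (p i).2 (p i).1)))
    (fun i x => mul_nonneg (Real.exp_nonneg _)
      (indicator_nonneg (fun _ _ => Real.exp_nonneg _) x))
    (by simpa only [mul_one] using hq) (fun x => ?_) fun x => ?_
  · linarith [neg_abs_le α, (abs_le.1 (hφB x)).2, hv0 x, ind_nonneg x]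
  · by_cases hx : x ∈ D
    · right
      rw [indicator_of_mem hx]
      linarith [neg_abs_le α, (abs_le.1 (hφB x)).2, hv0 x]
    · obtain ⟨i, hi⟩ := mem_iUnion.1 (notMem_compl_iff.1 hx)
      refine .inl ⟨i, ?_⟩
      rw [indicator_of_mem hi, ← Real.exp_add, Real.exp_le_exp]
      have := le_birkhoffSum_of_mem_bowenBall hφ
        (g := fun x => α - φ x + κ + v x + D.indicator (fun _ => K) x)
        (fun x => le_add_of_nonneg_right (ind_nonneg x)) hi
      linarith

end BallCodes

section Guess

variable {X A : Type*} [MetricSpace X] [MeasurableSpace X] [OpensMeasurableSpace X]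
  {π : X → A}

lemma exists_compact_fibers [Countable A] (hπ : ∀ a, MeasurableSet (π ⁻¹' {a})) (μ : Measure X)
    [IsFiniteMeasure μ] [μ.InnerRegularCompactLTTop] {δ : ℝ} (hδ : 0 < δ) :
    ∃ K : A → Set X, (∀ a, IsCompact (K a)) ∧ (∀ a, K a ⊆ π ⁻¹' {a}) ∧
      μ.real (⋃ a, K a)ᶜ ≤ δ := by
  obtain ⟨d, hd0, hd⟩ := ENNReal.exists_pos_sum_of_countable' (ENNReal.ofReal_pos.2 hδ).ne' A
  choose K hKπ hK hμK using fun a =>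
    (hπ a).exists_isCompact_sdiff_lt (μ := μ) (measure_ne_top _ _) (hd0 a).ne'
  refine ⟨K, hK, hKπ, ENNReal.toReal_le_of_le_ofReal hδ.le ?_⟩
  calc μ (⋃ a, K a)ᶜ ≤ μ (⋃ a, π ⁻¹' {a} \ K a) := by
        refine measure_mono fun x hx => mem_iUnion.2 ⟨π x, rfl, fun h => hx ?_⟩
        exact mem_iUnion.2 ⟨π x, h⟩
    _ ≤ ∑' a, d a := (measure_iUnion_le _).trans (ENNReal.tsum_le_tsum fun a => (hμK a).le)
    _ ≤ ENNReal.ofReal δ := hd.le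

lemma exists_guess [Finite A] [Nonempty A] (hπ : ∀ a, MeasurableSet (π ⁻¹' {a})) (μ : Measure X)
    [IsFiniteMeasure μ] [μ.InnerRegularCompactLTTop] {δ : ℝ} (hδ : 0 < δ) :
    ∃ U : Set X, MeasurableSet U ∧ μ.real U ≤ δ ∧ ∃ ε > 0, ∃ G : X → A,
      ∀ c y, dist c y < ε → y ∉ U → G c = π y := by
  classical
  obtain ⟨K, hK, hKπ, hμK⟩ := exists_compact_fibers hπ μ hδ
  have separated (a b : A) : ∀ᶠ ε in nhdsWithin (0 : ℝ) (Ioi 0), a ≠ b →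
      Disjoint (Metric.thickening ε (K a)) (Metric.thickening ε (K b)) := by
    by_cases hab : a = b
    · exact .of_forall fun _ h => absurd hab h
    have hd : Disjoint (K a) (K b) :=
      (Disjoint.preimage π (disjoint_singleton.2 hab)).mono (hKπ a) (hKπ b)
    obtain ⟨r, hr0, hr⟩ := hd.exists_thickenings (hK a) (hK b).isClosed
    filter_upwards [Ioo_mem_nhdsGT hr0] with ε hε _
    exact hr.mono (Metric.thickening_mono hε.2.le _) (Metric.thickening_mono hε.2.le _)
  obtain ⟨ε, hε, hε0⟩ := ((eventually_all.2 fun a => eventually_all.2 (separated a)).and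
    self_mem_nhdsWithin).exists
  refine ⟨(⋃ a, K a)ᶜ, (MeasurableSet.iUnion fun a => (hK a).measurableSet).compl, hμK, ε, hε0,
    fun c => if h : ∃ a, c ∈ Metric.thickening ε (K a) then h.choose else Classical.arbitrary A,
    fun c y hcy hy => ?_⟩
  obtain ⟨a, ha⟩ := mem_iUnion.1 (notMem_compl_iff.1 hy)
  have hc : c ∈ Metric.thickening ε (K (π y)) := by
    rw [show π y = a from hKπ a ha]
    exact Metric.mem_thickening_iff.2 ⟨y, ha, hcy⟩
  have hex : ∃ a, c ∈ Metric.thickening ε (K a) := ⟨π y, hc⟩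
  simp only [hex, dif_pos]
  by_contra hne
  exact disjoint_left.1 (hε _ _ hne) hex.choose_spec hc

/-- Guess the label from the approximate position, at small cost, and spell it out on the small set
where the guess may fail. -/
lemma exists_approximate_label_code [Fintype A] [Nonempty A]
    (hπ : ∀ a, MeasurableSet (π ⁻¹' {a})) (μ : Measure X) [IsProbabilityMeasure μ]
    [μ.InnerRegularCompactLTTop] {κ : ℝ} (hκ : 0 < κ) :
    ∃ v : X → ℝ, Integrable v μ ∧ (∀ x, 0 ≤ v x) ∧ ∫ x, v x ∂μ ≤ κ ∧
      ∃ W : X → A → ℝ, (∀ c a, 0 ≤ W c a) ∧ (∀ c, ∑ a, W c a ≤ 1) ∧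
        ∃ ε > 0, ∀ c y, dist c y < ε → Real.exp (-v y) ≤ W c (π y) := by
  classical
  set η := 1 - Real.exp (-(κ / 2))
  have hη : 0 < η := sub_pos.2 (Real.exp_lt_one_iff.2 (by linarith))
  have card_pos : (1 : ℝ) ≤ Fintype.card A := by exact_mod_cast Fintype.card_pos (α := A)
  set L := Real.log (Fintype.card A / η)
  have hL : 0 < L := Real.log_pos <| (one_lt_div hη).2 <|
    (sub_lt_self 1 (Real.exp_pos _)).trans_le card_pos
  obtain ⟨U, hU, hμU, ε, hε, G, hG⟩ := exists_guess hπ μ (δ := κ / 2 / L) (by positivity)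
  have hint : Integrable (U.indicator fun _ => L) μ := (integrable_const L).indicator hU
  refine ⟨fun x => κ / 2 + U.indicator (fun _ => L) x, (integrable_const _).add hint,
    fun x => add_nonneg (by positivity) (indicator_nonneg (fun _ _ => hL.le) x), ?_,
    fun c a => (if G c = a then Real.exp (-(κ / 2)) else 0) + η / Fintype.card A,
    fun c a => by positivity, fun c => ?_, ε, hε, fun c y hcy => ?_⟩
  · rw [integral_add (integrable_const _) hint, integral_indicator_const L hU, integral_const]
    rw [le_div_iff₀ hL] at hμU
    simp only [probReal_univ, smul_eq_mul, one_mul]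
    linarith
  · rw [Finset.sum_add_distrib, Finset.sum_ite_eq, if_pos (Finset.mem_univ _), Finset.sum_const,
      Finset.card_univ, nsmul_eq_mul, mul_div_cancel₀ _ (by positivity : (Fintype.card A : ℝ) ≠ 0)]
    exact (add_sub_cancel _ _).le
  · by_cases hy : y ∈ U
    · simp only [indicator_of_mem hy]
      calc Real.exp (-(κ / 2 + L)) ≤ Real.exp (-L) := Real.exp_le_exp.2 (by linarith)
        _ = η / Fintype.card A := by
          rw [Real.exp_neg, Real.exp_log (by positivity), inv_div]
        _ ≤ _ := le_add_of_nonneg_left (by positivity)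
    · simp only [indicator_of_notMem hy, add_zero, hG c y hcy hy, if_true]
      exact le_add_of_nonneg_right (by positivity)

end Guess

section LowerBound

lemma exists_measureReal_compl_iUnion_fin_le {X : Type*} [MeasurableSpace X] {μ : Measure X}
    [IsProbabilityMeasure μ] {B : ℕ → Set X} (hB : ∀ i, MeasurableSet (B i))
    (hμ : μ (⋃ i, B i) = 1) {δ : ℝ} (hδ : 0 < δ) : ∃ k : ℕ, μ.real (⋃ i : Fin k, B i)ᶜ ≤ δ := by
  have hmono : Monotone fun k : ℕ => ⋃ i : Fin k, B i := fun k l hkl =>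
    iUnion_subset fun i => subset_iUnion_of_subset (i.castLE hkl) subset_rfl
  have hU : ⋃ k : ℕ, ⋃ i : Fin k, B i = ⋃ i, B i := by
    refine Subset.antisymm (iUnion_subset fun k => iUnion_subset fun i => subset_iUnion B i)
      (iUnion_subset fun i => ?_)
    exact subset_iUnion_of_subset (i + 1) (subset_iUnion_of_subset (Fin.last i) subset_rfl)
  have hlim := tendsto_measure_iUnion_atTop (μ := μ) hmono
  rw [hU, hμ] at hlim
  obtain ⟨k, hk⟩ := (((ENNReal.tendsto_toReal ENNReal.one_ne_top).comp hlim).eventually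
    (lt_mem_nhds (sub_lt_self _ hδ))).exists
  refine ⟨k, ?_⟩
  rw [probReal_compl_eq_one_sub (.iUnion fun i : Fin k => hB i)]
  have : 1 - δ < μ.real (⋃ i : Fin k, B i) := hk
  linarith

variable {X : Type*} [MetricSpace X] [MeasurableSpace X] {f : X → X} {φ : X → ℝ}
  {μ : Measure X} [IsProbabilityMeasure μ]

lemma measurableSet_bowenBall [OpensMeasurableSpace X] (hf : Measurable f) (x : X) (n : ℕ)
    (ε : ℝ) : MeasurableSet (bowenBall f x n ε) := by
  have : bowenBall f x n ε = ⋂ i < n, f^[i] ⁻¹' Metric.ball (f^[i] x) ε := by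
    ext y
    simp only [bowenBall, mem_ofPred_eq, mem_iInter, mem_preimage, Metric.mem_ball']
  rw [this]
  exact .biInter (Set.to_countable _) fun i _ => hf.iterate i Metric.isOpen_ball.measurableSet

lemma exists_fin_bowenBall_cover_of_mZ_eq_zero [OpensMeasurableSpace X] (hf : Measurable f)
    {Z : Set X} {α ε : ℝ} (hα : mZ f φ Z α ε = 0) (hZ : μ Z = 1) {δ : ℝ} (hδ : 0 < δ) :
    ∃ (k : ℕ) (p : Fin k → X × ℕ), (∀ i, 0 < (p i).2) ∧
      ∑ i, Real.exp (-α * (p i).2 + birkhoffSum f φ (p i).2 (p i).1) ≤ 1 / 2 ∧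
      μ.real (⋃ i, bowenBall f (p i).1 (p i).2 ε)ᶜ ≤ δ := by
  obtain ⟨c, hc1, hcZ, hc⟩ := mZ_eq_zero_iff.1 hα 1 (ENNReal.ofReal (1 / 2)) (by norm_num)
  obtain ⟨k, hk⟩ := exists_measureReal_compl_iUnion_fin_le
    (fun i => measurableSet_bowenBall hf (c i).1 (c i).2 ε)
    (le_antisymm prob_le_one (hZ.ge.trans (measure_mono hcZ))) hδ
  refine ⟨k, fun i => c i, fun i => hc1 i, ?_, hk⟩
  rw [← ENNReal.ofReal_le_ofReal_iff (by norm_num), ENNReal.ofReal_sum_of_nonneg fun i _ =>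
    Real.exp_nonneg _, ← tsum_fintype (L := .unconditional _)]
  exact (ENNReal.tsum_comp_le_tsum_of_injective Fin.val_injective
    (fun i => ballWeight f φ α (c i))).trans hc.le

variable {A : Type*} [Fintype A] [CompactSpace X] [BorelSpace X]

lemma liminf_wordEntropy_le_of_mZ_eq_zero (hμ : MeasurePreserving f μ μ) (hφ : Continuous φ)
    {π : X → A} (hπ : ∀ a, MeasurableSet (π ⁻¹' {a})) {κ : ℝ} (hκ : 0 < κ) :
    ∃ ε > 0, ∀ (Z : Set X) (α : ℝ), μ Z = 1 → mZ f φ Z α ε = 0 →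
      liminf (fun n : ℕ => ((wordEntropy f π μ n / n : ℝ) : EReal)) atTop ≤
        ((α - ∫ x, φ x ∂μ + 3 * κ : ℝ) : EReal) := by
  obtain ⟨x₀⟩ := μ.nonempty_of_neZero
  have : Nonempty A := ⟨π x₀⟩
  obtain ⟨v, hvint, hv0, hvκ, W, hW0, hW, ε₁, hε₁, hv⟩ := exists_approximate_label_code hπ μ hκ
  obtain ⟨ε₂, hε₂, hφε⟩ := Metric.uniformContinuous_iff.1
    (CompactSpace.uniformContinuous_of_continuous hφ) κ hκ
  obtain ⟨B, hB⟩ := isCompact_univ.exists_bound_of_continuousOn hφ.continuousOn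
  refine ⟨min ε₁ ε₂, lt_min hε₁ hε₂, fun Z α hZ hα => ?_⟩
  set K := Real.log (2 * Fintype.card A) + |α| + B
  obtain ⟨k, p, hp, hpsum, hpμ⟩ := exists_fin_bowenBall_cover_of_mZ_eq_zero hμ.measurable hα hZ
    (δ := κ / (|K| + 1)) (by positivity)
  have hcode := isCodeCost_of_bowenBall_cover hW0 hW hv0
    (fun x y hxy => hv x y (hxy.trans_le (min_le_left _ _)))
    (fun x y hxy => sub_le_iff_le_add'.1 (abs_sub_le_iff.1
      (hφε (hxy.trans_le (min_le_right _ _))).le).2) hκ.le (fun x => hB x trivial) p hp hpsum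
  set D := (⋃ i, bowenBall f (p i).1 (p i).2 (min ε₁ ε₂))ᶜ
  have hD : MeasurableSet D :=
    (MeasurableSet.iUnion fun i => measurableSet_bowenBall hμ.measurable _ _ _).compl
  have hDK : μ.real D * K ≤ κ := by
    rw [le_div_iff₀ (by positivity)] at hpμ
    nlinarith [le_abs_self K, measureReal_nonneg (μ := μ) (s := D)]
  have hφint : Integrable φ μ :=
    hφ.integrable_of_hasCompactSupport (HasCompactSupport.of_compactSpace φ)
  have hint₁ : Integrable (fun x => α - φ x) μ := (integrable_const α).sub hφint
  have hint₂ : Integrable (fun x => α - φ x + κ) μ := hint₁.add (integrable_const κ)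
  have hint₃ : Integrable (fun x => α - φ x + κ + v x) μ := hint₂.add hvint
  have hint₄ := (integrable_const (μ := μ) K).indicator hD
  refine (hcode.liminf_wordEntropy_le hμ hπ (hint₃.add hint₄)).trans
    (EReal.coe_le_coe_iff.2 ?_)
  calc ∫ x, (α - φ x + κ + v x + D.indicator (fun _ => K) x) ∂μ
      = α - ∫ x, φ x ∂μ + κ + ∫ x, v x ∂μ + μ.real D * K := by
        rw [integral_add hint₃ hint₄, integral_add hint₂ hvint,
          integral_add hint₁ (integrable_const κ), integral_sub (integrable_const α) hφint,
          integral_indicator_const K hD]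
        simp only [integral_const, probReal_univ, smul_eq_mul, one_mul]
    _ ≤ α - ∫ x, φ x ∂μ + 3 * κ := by linarith

theorem ksEntropy_add_integral_le_Pmu (hμ : MeasurePreserving f μ μ) (hφ : Continuous φ) :
    ksEntropy f μ + ((∫ x, φ x ∂μ : ℝ) : EReal) ≤ Pmu f φ μ := by
  have sub_iff (a b : EReal) :
      a ≤ b - ((∫ x, φ x ∂μ : ℝ) : EReal) ↔ a + ((∫ x, φ x ∂μ : ℝ) : EReal) ≤ b :=
    EReal.le_sub_iff_add_le (.inl (EReal.coe_ne_bot _)) (.inl (EReal.coe_ne_top _))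
  rw [← sub_iff, ksEntropy_eq_iSup_wordEntropy]
  refine iSup₂_le fun s hs => (sub_iff _ _).2 (le_of_forall_lt_imp_le_of_dense fun b hb => ?_)
  obtain ⟨b₁, hbb₁, hb₁⟩ := EReal.lt_iff_exists_real_btwn.1 hb
  obtain ⟨b₂, hb₁₂, hb₂⟩ := EReal.lt_iff_exists_real_btwn.1 hb₁
  rw [EReal.coe_lt_coe_iff] at hb₁₂
  obtain ⟨ε, hε, bound⟩ := liminf_wordEntropy_le_of_mZ_eq_zero hμ hφ
    (fun a => hs.measurableSet_label_preimage a) (κ := (b₂ - b₁) / 3) (by linarith)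
  refine hbb₁.le.trans (le_iSup₂_of_le ε hε (le_iInf₂ fun Z hZ => le_iInf₂ fun α hα => ?_))
  have := hb₂.trans_le (add_le_add_left (bound Z α hZ.2 hα) _)
  rw [← EReal.coe_add, EReal.coe_lt_coe_iff] at this
  exact EReal.coe_le_coe_iff.2 (by linarith)

end LowerBound

section BowenCover

variable {X A : Type*} [Fintype A] {f : X → X} {π : X → A} {g φ : X → ℝ}

lemma tsum_ballWeight_le_of_hasWordMass {C α β : ℝ} {n : ℕ}
    (hg : HasWordMass f π n (fun x => Real.exp (-birkhoffSum f g n x)) C) {J : Set (Fin n → A)}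
    (c : J → X) (hc : ∀ w, word f π n (c w) = w)
    (hneg : ∀ w, birkhoffSum f (fun x => φ x + g x - β) n (c w) < 0) :
    ∑' w, ballWeight f φ α (c w, n) ≤ ENNReal.ofReal (C * Real.exp (-(α - β)) ^ n) := by
  classical
  obtain ⟨Q, hQ0, hQ, hgQ⟩ := hg
  have weight_le (w : J) : ballWeight f φ α (c w, n) ≤
      ENNReal.ofReal (Q w * Real.exp (-(α - β)) ^ n) := by
    refine ENNReal.ofReal_le_ofReal ?_
    have split : birkhoffSum f (fun x => φ x + g x - β) n (c w) =
        birkhoffSum f φ n (c w) + birkhoffSum f g n (c w) - n * β := by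
      simp only [birkhoffSum, Finset.sum_sub_distrib, Finset.sum_add_distrib, Finset.sum_const,
        Finset.card_range, nsmul_eq_mul]
    calc Real.exp (-α * n + birkhoffSum f φ n (c w))
        ≤ Real.exp (-birkhoffSum f g n (c w) + n * -(α - β)) :=
          Real.exp_le_exp.2 (by linarith [hneg w])
      _ = Real.exp (-birkhoffSum f g n (c w)) * Real.exp (-(α - β)) ^ n := by
          rw [Real.exp_add, Real.exp_nat_mul]
      _ ≤ Q w * Real.exp (-(α - β)) ^ n := by
          gcongr
          exact (hgQ _).trans_eq (by rw [hc])
  calc ∑' w, ballWeight f φ α (c w, n)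
      ≤ ∑' w : J, ENNReal.ofReal (Q w * Real.exp (-(α - β)) ^ n) := ENNReal.tsum_le_tsum weight_le
    _ ≤ ∑' w, ENNReal.ofReal (Q w * Real.exp (-(α - β)) ^ n) :=
        ENNReal.tsum_comp_le_tsum_of_injective Subtype.val_injective _
    _ = ENNReal.ofReal ((∑ w, Q w) * Real.exp (-(α - β)) ^ n) := by
        rw [tsum_fintype, Finset.sum_mul,
          ENNReal.ofReal_sum_of_nonneg fun w _ => mul_nonneg (hQ0 w) (by positivity)]
    _ ≤ _ := by gcongr

/-- The points with infinitely many initial orbit segments along which the code cost `g` stays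
below `n β - S_n φ`. -/
def cheapPoints (f : X → X) (φ g : X → ℝ) (β : ℝ) : Set X :=
  {x | ∃ᶠ n in atTop, birkhoffSum f (fun x => φ x + g x - β) n x < 0}

theorem IsCodeCost.mZ_cheapPoints_eq_zero [MetricSpace X] (hg : IsCodeCost f π g) {ε : ℝ}
    (hπ : ∀ x y, π x = π y → dist x y < ε) {α β : ℝ} (hβα : β < α)
    (hne : (cheapPoints f φ g β).Nonempty) : mZ f φ (cheapPoints f φ g β) α ε = 0 := by
  obtain ⟨C, hC⟩ := hg
  set E : ℕ → Set X := fun n => {x | birkhoffSum f (fun x => φ x + g x - β) n x < 0}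
  choose c hcE hc using fun n (w : {w // ∃ x ∈ E n, word f π n x = w}) => w.2
  have cover n : E n ⊆ ⋃ w, bowenBall f (c n w) n ε := fun x hx =>
    mem_iUnion.2 ⟨⟨word f π n x, x, hx, rfl⟩, fun i hi => hπ _ _ (congrFun (hc n _) ⟨i, hi⟩)⟩
  refine mZ_frequently_mem_eq_zero cover (ne_top_of_le_ne_top ?_ (ENNReal.tsum_le_tsum fun n =>
    tsum_ballWeight_le_of_hasWordMass (hC n) (c n) (hc n) (hcE n))) hne
  have hθ : Real.exp (-(α - β)) < 1 := Real.exp_lt_one_iff.2 (by linarith)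
  have hsum : Summable fun n : ℕ => C * Real.exp (-(α - β)) ^ n :=
    (summable_geometric_of_lt_one (Real.exp_nonneg _) hθ).mul_left C
  have hC0 : 0 ≤ C := (hC 0).nonneg
  exact (ENNReal.ofReal_tsum_of_nonneg (fun n => by positivity) hsum) ▸ ENNReal.ofReal_ne_top

end BowenCover

section BlockCost

variable {X A : Type*} [Fintype A] {f : X → X} {π : X → A} {k : ℕ} {r : (Fin k → A) → ℝ}

lemma sum_range_mul (h : ℕ → ℝ) (k m : ℕ) :
    ∑ j ∈ Finset.range (k * m), h j =
      ∑ p : Fin k, ∑ i ∈ Finset.range m, h (p + k * i) := by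
  induction m with
  | zero => simp only [mul_zero, Finset.range_zero, Finset.sum_empty, Finset.sum_const_zero]
  | succ m ih =>
    rw [Nat.mul_succ, Finset.sum_range_add, ih, Finset.sum_range, ← Finset.sum_add_distrib]
    refine Finset.sum_congr rfl fun p _ => ?_
    rw [Finset.sum_range_succ, add_comm (k * m) p]

lemma hasWordMass_blocks (hr : ∑ w, Real.exp (-r w) ≤ 1) (m : ℕ) :
    HasWordMass f π (k * m)
      (fun x => Real.exp (-∑ i ∈ Finset.range m, r (word f π k (f^[k * i] x)))) 1 := by
  have block : HasWordMass f π k (fun x => Real.exp (-r (word f π k x))) 1 :=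
    ⟨fun w => Real.exp (-r w), fun w => Real.exp_nonneg _, hr, fun x => le_rfl⟩
  induction m with
  | zero => simpa using HasWordMass.const (f := f) (π := π) (n := 0) zero_le_one
  | succ m ih =>
    have := block.mul ih fun x => Real.exp_nonneg _
    rw [Nat.mul_succ, add_comm]
    refine this.mono (fun x => le_of_eq ?_) (mul_one 1).le
    rw [← Real.exp_add, ← neg_add, Finset.sum_range_succ', add_comm]
    simp only [mul_zero, Function.iterate_zero, id_eq, Nat.mul_succ, Function.iterate_add_apply]

lemma hasWordMass_blocks_of_phase [Nonempty A] (hr : ∑ w, Real.exp (-r w) ≤ 1) {m q : ℕ}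
    (hq : q < k) (p : Fin k) :
    HasWordMass f π (k * m + k + q)
      (fun x => Real.exp (-∑ i ∈ Finset.range m, r (word f π k (f^[p + k * i] x))))
      ((Fintype.card A : ℝ) ^ (2 * k)) := by
  have hN : (1 : ℝ) ≤ Fintype.card A := by exact_mod_cast Fintype.card_pos (α := A)
  have := ((HasWordMass.const (n := p) zero_le_one).mul
    (hasWordMass_blocks (f := f) (π := π) hr m) fun _ => Real.exp_nonneg _).mul
      (HasWordMass.const (n := k - p + q) zero_le_one) fun _ => zero_le_one
  rw [show k * m + k + q = p + k * m + (k - p + q) by omega]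
  refine this.mono (fun x => le_of_eq ?_) ?_
  · simp only [one_mul, mul_one, add_comm (p : ℕ), Function.iterate_add_apply]
  · rw [mul_one, mul_one, mul_one, ← pow_add]
    exact pow_le_pow_right₀ hN (by omega)

lemma exists_phase_sum_le_birkhoffSum {h : X → ℝ} (hh : ∀ x, 0 ≤ h x) (hk : 0 < k) {m n : ℕ}
    (hn : k * m ≤ n) (x : X) : ∃ p : Fin k,
      ∑ i ∈ Finset.range m, h (f^[p + k * i] x) ≤ birkhoffSum f (fun x => h x / k) n x := by
  set T : Fin k → ℝ := fun p => ∑ i ∈ Finset.range m, h (f^[p + k * i] x)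
  have average : (∑ p, T p) / k ≤ birkhoffSum f (fun x => h x / k) n x := by
    rw [← sum_range_mul fun j => h (f^[j] x), Finset.sum_div]
    exact Finset.sum_le_sum_of_subset_of_nonneg (Finset.range_mono hn)
      fun _ _ _ => div_nonneg (hh _) (Nat.cast_nonneg k)
  have : Nonempty (Fin k) := ⟨⟨0, hk⟩⟩
  obtain ⟨p, -, hp⟩ := Finset.exists_le_of_sum_le (s := Finset.univ) (f := T)
    (g := fun _ => (∑ p, T p) / k) Finset.univ_nonempty (by
      rw [Finset.sum_const, Finset.card_univ, Fintype.card_fin, nsmul_eq_mul,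
        mul_div_cancel₀ _ (by positivity)])
  exact ⟨p, hp.trans average⟩

lemma nonneg_of_sum_exp_neg_le_one {W : Type*} [Fintype W] {r : W → ℝ}
    (hr : ∑ w, Real.exp (-r w) ≤ 1) (w : W) : 0 ≤ r w :=
  neg_nonpos.1 <| Real.exp_le_one_iff.1 <|
    (Finset.single_le_sum (f := fun w => Real.exp (-r w)) (fun _ _ => Real.exp_nonneg _)
      (Finset.mem_univ w)).trans hr

/-- A Kraft code of the `k`-words can be started at each of the `k` phases, and some phase costs
at most the average one. -/
theorem isCodeCost_of_kraft [Nonempty A] (hk : 0 < k) (hr : ∑ w, Real.exp (-r w) ≤ 1) :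
    IsCodeCost f π fun x => r (word f π k x) / k := by
  have hN : (1 : ℝ) ≤ Fintype.card A := by exact_mod_cast Fintype.card_pos (α := A)
  have hk1 : (1 : ℝ) ≤ k := by exact_mod_cast hk
  have hr0 x : 0 ≤ r (word f π k x) := nonneg_of_sum_exp_neg_le_one hr _
  refine ⟨k * (Fintype.card A : ℝ) ^ (2 * k), fun n => ?_⟩
  obtain hnk | hkn := lt_or_ge n k
  · refine (HasWordMass.const zero_le_one).mono (fun x => ?_) ?_
    · exact Real.exp_le_one_iff.2 (neg_nonpos.2 (Finset.sum_nonneg fun _ _ =>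
        div_nonneg (hr0 _) (Nat.cast_nonneg k)))
    · rw [mul_one]
      exact (pow_le_pow_right₀ hN (by omega)).trans (le_mul_of_one_le_left (by positivity) hk1)
  obtain ⟨m, q, hq, rfl⟩ : ∃ m q, q < k ∧ n = k * m + k + q :=
    ⟨(n - k) / k, (n - k) % k, Nat.mod_lt _ hk, by have := Nat.div_add_mod (n - k) k; omega⟩
  refine (HasWordMass.sum (hasWordMass_blocks_of_phase (m := m) hr hq)).mono (fun x => ?_)
    (by simp)
  obtain ⟨p, hp⟩ := exists_phase_sum_le_birkhoffSum (f := f) hr0 hk (m := m)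
    (n := k * m + k + q) (by omega) x
  exact (Real.exp_le_exp.2 (neg_le_neg hp)).trans
    (Finset.single_le_sum (f := fun p : Fin k => Real.exp
      (-∑ i ∈ Finset.range m, r (word f π k (f^[p + k * i] x))))
      (fun _ _ => Real.exp_nonneg _) (Finset.mem_univ p))

lemma exists_rat_code {W : Type*} [Fintype W] {p : W → ℝ} (hp : ∀ w, 0 ≤ p w)
    (hp1 : ∑ w, p w = 1) {γ : ℝ} (hγ : 0 < γ) : ∃ r : W → ℚ, ∑ w, Real.exp (-(r w : ℝ)) ≤ 1 ∧
      ∑ w, p w * r w ≤ ∑ w, Real.negMulLog (p w) + γ := by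
  have card_pos : (0 : ℝ) < Fintype.card W := by
    obtain ⟨w, -⟩ := Finset.exists_ne_zero_of_sum_ne_zero (hp1.trans_ne one_ne_zero)
    exact_mod_cast Fintype.card_pos_iff.2 ⟨w⟩
  set t := Real.exp (-(γ / 2))
  have ht : 0 < 1 - t := sub_pos.2 (Real.exp_lt_one_iff.2 (by linarith))
  set y : W → ℝ := fun w => t * p w + (1 - t) / Fintype.card W
  have hy w : 0 < y w := by have := hp w; positivity
  have hy1 : ∑ w, y w = 1 := by
    simp only [y]
    rw [Finset.sum_add_distrib, ← Finset.mul_sum, hp1, Finset.sum_const, Finset.card_univ,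
      nsmul_eq_mul, mul_div_cancel₀ _ card_pos.ne', mul_one, add_sub_cancel]
  choose r hyr hry using fun w =>
    exists_rat_btwn (lt_add_of_pos_right (-Real.log (y w)) (half_pos hγ))
  refine ⟨r, ?_, ?_⟩
  · rw [← hy1]
    exact Finset.sum_le_sum fun w _ => (Real.le_log_iff_exp_le (hy w)).1 (by linarith [hyr w])
  have term_le w : p w * r w ≤ Real.negMulLog (p w) + p w * γ := by
    obtain hw | hw := (hp w).eq_or_lt
    · simp [← hw]
    have : Real.log (p w) - γ / 2 ≤ Real.log (y w) := by
      rw [Real.le_log_iff_exp_le (hy w), sub_eq_neg_add, Real.exp_add, Real.exp_log hw]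
      exact le_add_of_nonneg_right (by positivity)
    rw [Real.negMulLog, neg_mul, ← mul_neg, ← mul_add]
    exact mul_le_mul_of_nonneg_left (by linarith [hry w]) hw.le
  calc ∑ w, p w * r w ≤ ∑ w, (Real.negMulLog (p w) + p w * γ) :=
        Finset.sum_le_sum fun w _ => term_le w
    _ = ∑ w, Real.negMulLog (p w) + γ := by
        rw [Finset.sum_add_distrib, ← Finset.sum_mul, hp1, one_mul]

end BlockCost

section Ergodic

variable {X : Type*} {f : X → X} {g : X → ℝ}

lemma bddBelow_range_birkhoffSum_comp_iff (x : X) :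
    BddBelow (range fun n => birkhoffSum f g n (f x)) ↔
      BddBelow (range fun n => birkhoffSum f g n x) := by
  simp only [bddBelow_def, forall_mem_range]
  refine ⟨fun ⟨c, hc⟩ => ⟨min 0 (g x + c), fun n => ?_⟩, fun ⟨c, hc⟩ => ⟨c - g x, fun n => ?_⟩⟩
  · cases n with
    | zero => exact min_le_left _ _
    | succ n =>
      rw [birkhoffSum_succ']
      exact (min_le_right _ _).trans (by linarith [hc n])
  · have := hc (n + 1)
    rw [birkhoffSum_succ'] at this
    linarith

lemma tendsto_min_birkhoffSum_div_of_bddBelow {x : X}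
    (hx : BddBelow (range fun n => birkhoffSum f g n x)) :
    Tendsto (fun n : ℕ => min (birkhoffSum f g n x / n) 0) atTop (nhds 0) := by
  obtain ⟨c, hc⟩ := hx
  rw [mem_lowerBounds, forall_mem_range] at hc
  have hlim : Tendsto (fun n : ℕ => min (c / n) 0) atTop (nhds 0) := by
    simpa using (tendsto_const_div_atTop_nhds_zero_nat c).min
      (tendsto_const_nhds (x := (0 : ℝ)))
  refine tendsto_of_tendsto_of_tendsto_of_le_of_le hlim tendsto_const_nhds (fun n => ?_)
    fun n => min_le_right _ _
  exact min_le_min_right _ (div_le_div_of_nonneg_right (hc n) (Nat.cast_nonneg n))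

variable [MeasurableSpace X] {ν : Measure X} {b : ℝ}

lemma integral_nonneg_of_bddBelow_birkhoffSum [IsProbabilityMeasure ν]
    (hν : MeasurePreserving f ν ν) (hgb : ∀ x, b ≤ g x) (hg : Integrable g ν)
    (hbdd : ∀ᵐ x ∂ν, BddBelow (range fun n => birkhoffSum f g n x)) : 0 ≤ ∫ x, g x ∂ν := by
  have hint n : Integrable (fun x => birkhoffSum f g n x / n) ν :=
    (integrable_birkhoffSum hν hg n).div_const _
  have hlim : Tendsto (fun n : ℕ => ∫ x, min (birkhoffSum f g n x / n) 0 ∂ν) atTop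
      (nhds (∫ _, (0 : ℝ) ∂ν)) := by
    refine tendsto_integral_of_dominated_convergence (fun _ => |b|)
      (fun n => ((hint n).inf (integrable_zero _ _ _)).aestronglyMeasurable)
      (integrable_const _) (fun n => ae_of_all _ fun x => ?_)
      (hbdd.mono fun x hx => tendsto_min_birkhoffSum_div_of_bddBelow hx)
    rw [Real.norm_eq_abs, abs_of_nonpos (min_le_right _ _), neg_le]
    refine le_min ?_ (neg_nonpos.2 (abs_nonneg b))
    obtain rfl | hn := n.eq_zero_or_pos
    · simp
    rw [le_div_iff₀ (by positivity)]
    have := birkhoffSum_ge_of_le (f := f) hgb n x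
    nlinarith [neg_abs_le b, this, (by positivity : (0 : ℝ) < n)]
  rw [integral_zero] at hlim
  refine le_of_tendsto hlim ((eventually_gt_atTop 0).mono fun n hn => ?_)
  calc ∫ x, min (birkhoffSum f g n x / n) 0 ∂ν
      ≤ ∫ x, birkhoffSum f g n x / n ∂ν :=
        integral_mono ((hint n).inf (integrable_zero _ _ _)) (hint n) fun x => min_le_left _ _
    _ = ∫ x, g x ∂ν := by
        rw [integral_div, integral_birkhoffSum hν hg, mul_div_cancel_left₀ _ (by positivity)]

/-- Otherwise the Birkhoff sums are bounded below, on an invariant set of full measure. -/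
theorem ae_frequently_birkhoffSum_neg [IsProbabilityMeasure ν] (hν : Ergodic f ν)
    (hgm : Measurable g) (hgb : ∀ x, b ≤ g x) (hg : Integrable g ν) (hneg : ∫ x, g x ∂ν < 0) :
    ∀ᵐ x ∂ν, ∃ᶠ n in atTop, birkhoffSum f g n x < 0 := by
  set E := {x | BddBelow (range fun n => birkhoffSum f g n x)}
  have hE : MeasurableSet E := measurableSet_bddBelow_range fun n =>
    Finset.measurable_fun_sum _ fun i _ => hgm.comp (hν.measurable.iterate i)
  have hfE : f ⁻¹' E = E := ext fun x => bddBelow_range_birkhoffSum_comp_iff x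
  obtain hE0 | hE1 := hν.ae_empty_or_univ hE hfE
  · filter_upwards [hE0.mem_iff] with x hx
    by_contra hpos
    rw [not_frequently] at hpos
    refine (hx.1 ?_ : x ∈ (∅ : Set X))
    exact (isBoundedUnder_of_eventually_ge (hpos.mono fun n hn => not_lt.1 hn)).bddBelow_range
  · refine absurd hneg (integral_nonneg_of_bddBelow_birkhoffSum hν.toMeasurePreserving hgb hg
      ?_).not_gt
    filter_upwards [hE1.mem_iff] with x hx using hx.2 trivial

end Ergodic

section UpperBound

variable {X A : Type*} [MeasurableSpace X] [Fintype A] {f : X → X} {π : X → A} {φ : X → ℝ} {β : ℝ}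

lemma measurableSet_cheapPoints {g : X → ℝ} (hf : Measurable f) (hφ : Measurable φ)
    (hg : Measurable g) : MeasurableSet (cheapPoints f φ g β) := by
  have : cheapPoints f φ g β =
      limsup (fun n => {x | birkhoffSum f (fun x => φ x + g x - β) n x < 0}) atTop := by
    ext x
    rw [mem_limsup_iff_frequently_mem]
    rfl
  rw [this]
  exact .measurableSet_limsup fun n => measurableSet_lt (Finset.measurable_fun_sum _ fun i _ =>
    ((hφ.add hg).sub_const β).comp (hf.iterate i)) measurable_const

lemma exists_rat_code_integral_neg (hf : Measurable f) (hπ : ∀ a, MeasurableSet (π ⁻¹' {a}))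
    {ν : Measure X} [IsProbabilityMeasure ν] (hφ : Integrable φ ν)
    (hβ : liminf (fun n : ℕ => ((wordEntropy f π ν n / n : ℝ) : EReal)) atTop <
      ((β - ∫ x, φ x ∂ν : ℝ) : EReal)) :
    ∃ k > 0, ∃ r : (Fin k → A) → ℚ, ∑ w, Real.exp (-(r w : ℝ)) ≤ 1 ∧
      ∫ x, (φ x + (r (word f π k x) : ℝ) / k - β) ∂ν < 0 := by
  obtain ⟨k, hkβ, hk⟩ := ((frequently_lt_of_liminf_lt (by isBoundedDefault) hβ).and_eventually
    (eventually_gt_atTop 0)).exists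
  rw [EReal.coe_lt_coe_iff] at hkβ
  have hk' : (0 : ℝ) < k := by exact_mod_cast hk
  rw [div_lt_iff₀ hk'] at hkβ
  obtain ⟨r, hr, hrH⟩ := exists_rat_code (fun w => measureReal_nonneg)
    (sum_measureReal_word hf hπ ν k) (half_pos (sub_pos.2 hkβ))
  have hint : Integrable (fun x => (r (word f π k x) : ℝ) / k) ν :=
    (integrable_comp_word hf hπ ν k fun w => (r w : ℝ)).div_const k
  refine ⟨k, hk, r, hr, ?_⟩
  have cost_lt : (∫ x, (r (word f π k x) : ℝ) ∂ν) / k < β - ∫ x, φ x ∂ν := by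
    rw [div_lt_iff₀ hk', integral_comp_word hf hπ ν k fun w => (r w : ℝ)]
    refine hrH.trans_lt ?_
    change wordEntropy f π ν k + _ < _
    linarith
  have hsum : Integrable (fun x => φ x + (r (word f π k x) : ℝ) / k) ν := hφ.add hint
  rw [integral_sub hsum (integrable_const β), integral_add hφ hint, integral_div,
    integral_const, probReal_univ, one_smul]
  linarith

theorem exists_rat_code_ae_mem_cheapPoints (hπ : ∀ a, MeasurableSet (π ⁻¹' {a}))
    {ν : Measure X} [IsProbabilityMeasure ν] (hν : Ergodic f ν) (hφm : Measurable φ) {b : ℝ}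
    (hφb : ∀ x, b ≤ φ x) (hφ : Integrable φ ν)
    (hβ : liminf (fun n : ℕ => ((wordEntropy f π ν n / n : ℝ) : EReal)) atTop <
      ((β - ∫ x, φ x ∂ν : ℝ) : EReal)) :
    ∃ k > 0, ∃ r : (Fin k → A) → ℚ, ∑ w, Real.exp (-(r w : ℝ)) ≤ 1 ∧
      ∀ᵐ x ∂ν, x ∈ cheapPoints f φ (fun x => (r (word f π k x) : ℝ) / k) β := by
  obtain ⟨k, hk, r, hr, hneg⟩ := exists_rat_code_integral_neg hν.measurable hπ hφ hβ
  have hcost : Measurable fun x => (r (word f π k x) : ℝ) / k :=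
    (measurable_comp_word hν.measurable hπ k fun w => (r w : ℝ)).div_const _
  have hint : Integrable (fun x => (r (word f π k x) : ℝ) / k) ν :=
    (integrable_comp_word hν.measurable hπ ν k fun w => (r w : ℝ)).div_const _
  refine ⟨k, hk, r, hr, ae_frequently_birkhoffSum_neg (b := b - β) hν
    ((hφm.add hcost).sub_const β) (fun x => ?_) ((hφ.add hint).sub (integrable_const β)) hneg⟩
  have : 0 ≤ (r (word f π k x) : ℝ) / k :=
    div_nonneg (nonneg_of_sum_exp_neg_le_one hr _) (Nat.cast_nonneg k)
  linarith [hφb x]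

end UpperBound

section Countable

variable {X : Type*} [MetricSpace X] [CompactSpace X] [MeasurableSpace X] [BorelSpace X]
  {f : X → X} {φ : X → ℝ} {β ε : ℝ}

/-- Only countably many rational block codes are needed, so one set serves all ergodic measures. -/
theorem exists_measurableSet_forall_ergodic_of_pressure_lt (hf : Measurable f)
    (hφ : Continuous φ) (β : ℝ) (hε : 0 < ε) :
    ∃ Z, MeasurableSet Z ∧ (Z.Nonempty → PZeps f φ Z ε ≤ β) ∧
      ∀ ν : Measure X, IsProbabilityMeasure ν → Ergodic f ν →
        ksEntropy f ν + ((∫ x, φ x ∂ν : ℝ) : EReal) < β → ν Z = 1 := by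
  obtain ⟨s, hs, hdist⟩ := exists_isFinPartition_dist_lt (X := X) hε
  let I := {p : Σ k : ℕ, ((Fin k → {A // A ∈ s}) → ℚ) //
    0 < p.1 ∧ ∑ w, Real.exp (-(p.2 w : ℝ)) ≤ 1}
  let g (p : I) (x : X) : ℝ := (p.1.2 (word f hs.label p.1.1 x) : ℝ) / p.1.1
  have hπ a : MeasurableSet (hs.label ⁻¹' {a}) := hs.measurableSet_label_preimage _
  have hgm p : Measurable (g p) :=
    (measurable_comp_word hf hπ _ fun w => (p.1.2 w : ℝ)).div_const _
  refine ⟨⋃ p, cheapPoints f φ (g p) β,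
    .iUnion fun p => measurableSet_cheapPoints hf hφ.measurable (hgm p), fun hne => ?_,
    fun ν _ hν hβ => ?_⟩
  · refine le_of_forall_gt_imp_ge_of_dense fun c hc => ?_
    obtain ⟨α, hβα, hαc⟩ := EReal.lt_iff_exists_real_btwn.1 hc
    refine (iInf₂_le α (mZ_iUnion_eq_zero (fun p hp => ?_) hne)).trans hαc.le
    have : Nonempty {A // A ∈ s} := ⟨hs.label hp.some⟩
    exact (isCodeCost_of_kraft (r := fun w => (p.1.2 w : ℝ)) p.2.1 p.2.2).mZ_cheapPoints_eq_zero
      hdist (EReal.coe_lt_coe_iff.1 hβα) hp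
  · obtain ⟨B, hB⟩ := (isCompact_range hφ).isBounded.exists_norm_le
    rw [forall_mem_range] at hB
    have hβs : liminf (fun n : ℕ => ((wordEntropy f hs.label ν n / n : ℝ) : EReal)) atTop <
        ((β - ∫ x, φ x ∂ν : ℝ) : EReal) := by
      rw [EReal.coe_sub, EReal.lt_sub_iff_add_lt (.inl (EReal.coe_ne_bot _))
        (.inl (EReal.coe_ne_top _))]
      refine (add_le_add_left ?_ _).trans_lt hβ
      rw [ksEntropy_eq_iSup_wordEntropy]
      exact le_iSup₂_of_le s hs le_rfl
    obtain ⟨k, hk, r, hr, hae⟩ := exists_rat_code_ae_mem_cheapPoints hπ hν hφ.measurable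
      (fun x => neg_le_of_abs_le (hB x)) (.of_bound hφ.aestronglyMeasurable B (ae_of_all _ hB)) hβs
    rw [← mem_ae_iff_prob_eq_one
      (.iUnion fun p => measurableSet_cheapPoints hf hφ.measurable (hgm p))]
    filter_upwards [hae] with x hx using mem_iUnion.2 ⟨⟨⟨k, r⟩, hk, hr⟩, hx⟩

end Countable

section ErgodicDecomposition

variable {X : Type*} [TopologicalSpace X] [MeasurableSpace X] [BorelSpace X]

instance : BorelSpace (ProbabilityMeasure X) := ⟨rfl⟩

namespace IsErgodicDecomp

variable {f : X → X} {J : Set X} {μ : Measure X} {τ : Measure (ProbabilityMeasure X)}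

lemma exists_ergodic (hτ : IsErgodicDecomp f J μ τ) :
    ∃ ν : ProbabilityMeasure X, Ergodic f ν.toMeasure := by
  obtain ⟨ν, hν, -⟩ := nonempty_of_measure_ne_zero (hτ.2.1.trans_ne one_ne_zero)
  exact ⟨ν, hν⟩

lemma ae_of_forall_ergodic (hτ : IsErgodicDecomp f J μ τ) {p q : ProbabilityMeasure X → Prop}
    (hp : MeasurableSet {ν | p ν}) (hq : ∀ᵐ ν ∂τ, q ν)
    (h : ∀ ν, Ergodic f ν.toMeasure → q ν → p ν) : ∀ᵐ ν ∂τ, p ν := by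
  have := hτ.1
  rw [ae_iff_prob_eq_one (measurableSet_setOfPred.1 hp)]
  refine le_antisymm prob_le_one ?_
  rw [← hτ.2.1]
  calc τ {ν | Ergodic f ν.toMeasure ∧ ν.toMeasure J = 1}
      ≤ τ ({ν | p ν} ∪ {ν | ¬ q ν}) := measure_mono fun ν hν =>
        (em (q ν)).imp (h ν hν.1) id
    _ ≤ τ {ν | p ν} + τ {ν | ¬ q ν} := measure_union_le _ _
    _ = τ {ν | p ν} := by rw [ae_iff.1 hq, add_zero]

end IsErgodicDecomp

variable [HasOuterApproxClosed X]

lemma measurable_apply_probabilityMeasure {A : Set X} (hA : MeasurableSet A) :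
    Measurable fun ν : ProbabilityMeasure X => ν.toMeasure A := by
  have : Measurable fun ν : ProbabilityMeasure X => ν.toMeasure := by
    refine Measurable.measure_of_isPiSystem_of_isProbabilityMeasure
      (BorelSpace.measurable_eq (α := X)) isPiSystem_isOpen fun G hG =>
        LowerSemicontinuous.measurable (lowerSemicontinuous_iff_le_liminf.2 fun ν => ?_)
    exact ProbabilityMeasure.le_liminf_measure_open_of_tendsto tendsto_id hG
  exact (Measure.measurable_coe hA).comp this

namespace IsErgodicDecomp

variable {f : X → X} {J : Set X} {μ : Measure X} {τ : Measure (ProbabilityMeasure X)}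

lemma measure_eq_lintegral [IsFiniteMeasure μ] (hτ : IsErgodicDecomp f J μ τ) {A : Set X}
    (hA : MeasurableSet A) : μ A = ∫⁻ ν, ν.toMeasure A ∂τ := by
  have := hτ.1
  have h := hτ.2.2 (A.indicator 1) ((integrable_const 1).indicator hA)
  simp only [integral_indicator_one hA, measureReal_def] at h
  rw [integral_toReal (measurable_apply_probabilityMeasure hA).aemeasurable
    (ae_of_all _ fun ν => measure_lt_top _ _)] at h
  have finite : ∫⁻ ν, ν.toMeasure A ∂τ ≠ ⊤ :=
    ne_top_of_le_ne_top ENNReal.one_ne_top <|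
      (lintegral_mono fun _ => prob_le_one).trans_eq (by rw [lintegral_one, measure_univ])
  exact (ENNReal.toReal_eq_toReal_iff' (measure_ne_top _ _) finite).1 h

lemma measure_eq_one_iff_ae [IsProbabilityMeasure μ] (hτ : IsErgodicDecomp f J μ τ) {Z : Set X}
    (hZ : MeasurableSet Z) : μ Z = 1 ↔ ∀ᵐ ν ∂τ, ν.toMeasure Z = 1 := by
  rw [← prob_compl_eq_zero_iff hZ, hτ.measure_eq_lintegral hZ.compl,
    lintegral_eq_zero_iff (measurable_apply_probabilityMeasure hZ.compl)]
  exact eventually_congr (ae_of_all _ fun ν => prob_compl_eq_zero_iff hZ)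

lemma ae_measurePreserving [SecondCountableTopology X] (hτ : IsErgodicDecomp f J μ τ) :
    ∀ᵐ ν ∂τ, MeasurePreserving f ν.toMeasure ν.toMeasure := by
  obtain ⟨_, hν₀⟩ := hτ.exists_ergodic
  have hf := hν₀.measurable
  set 𝒜 := generateSetAlgebra (MeasurableSpace.countableGeneratingSet X)
  have generate : MeasurableSpace.generateFrom 𝒜 = ‹MeasurableSpace X› := by
    rw [generateFrom_generateSetAlgebra_eq, MeasurableSpace.generateFrom_countableGeneratingSet]
  have measurable_of_mem A (hA : A ∈ 𝒜) : MeasurableSet A :=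
    generate ▸ MeasurableSpace.measurableSet_generateFrom hA
  have invariant_on : ∀ᵐ ν ∂τ, ∀ A ∈ 𝒜, ν.toMeasure (f ⁻¹' A) = ν.toMeasure A := by
    refine (ae_ball_iff (countable_generateSetAlgebra
      (MeasurableSpace.countable_countableGeneratingSet))).2 fun A hA => ?_
    have hA := measurable_of_mem A hA
    exact hτ.ae_of_forall_ergodic (q := fun _ => True) (measurableSet_eq_fun
      (measurable_apply_probabilityMeasure (hf hA)) (measurable_apply_probabilityMeasure hA))
      (ae_of_all _ fun _ => trivial) fun ν hν _ =>
        hν.toMeasurePreserving.measure_preimage hA.nullMeasurableSet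
  filter_upwards [invariant_on] with ν hν
  have := Measure.isProbabilityMeasure_map (μ := ν.toMeasure) hf.aemeasurable
  refine ⟨hf, ext_of_generate_finite 𝒜 generate.symm
    isSetAlgebra_generateSetAlgebra.isSetRing.isSetSemiring.isPiSystem (fun A hA => ?_)
    (by rw [measure_univ, measure_univ])⟩
  rw [Measure.map_apply hf (measurable_of_mem A hA), hν A hA]

lemma measurePreserving [SecondCountableTopology X] [IsFiniteMeasure μ]
    (hτ : IsErgodicDecomp f J μ τ) :
    MeasurePreserving f μ μ := by
  obtain ⟨_, hν₀⟩ := hτ.exists_ergodic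
  refine ⟨hν₀.measurable, Measure.ext fun A hA => ?_⟩
  rw [Measure.map_apply hν₀.measurable hA, hτ.measure_eq_lintegral (hν₀.measurable hA),
    hτ.measure_eq_lintegral hA]
  exact lintegral_congr_ae (hτ.ae_measurePreserving.mono fun ν hν =>
    hν.measure_preimage hA.nullMeasurableSet)

end IsErgodicDecomp

end ErgodicDecomposition

namespace IsErgodicDecomp

variable {X : Type*} [MetricSpace X] [MeasurableSpace X] [BorelSpace X] {f : X → X}
  {J : Set X} {μ : Measure X} {τ : Measure (ProbabilityMeasure X)}

theorem Pmu_le_of_ae_lt [CompactSpace X] {φ : X → ℝ} [IsProbabilityMeasure μ]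
    (hτ : IsErgodicDecomp f J μ τ) (hφ : Continuous φ) {β : ℝ} (hβ : ∀ᵐ ν ∂τ,
      ksEntropy f ν.toMeasure + ((∫ x, φ x ∂ν.toMeasure : ℝ) : EReal) < β) :
    Pmu f φ μ ≤ β := by
  obtain ⟨_, hν₀⟩ := hτ.exists_ergodic
  refine iSup₂_le fun ε hε => ?_
  obtain ⟨Z, hZ, hP, hfull⟩ :=
    exists_measurableSet_forall_ergodic_of_pressure_lt hν₀.measurable hφ β hε
  have hμZ : μ Z = 1 := (hτ.measure_eq_one_iff_ae hZ).2 <| hτ.ae_of_forall_ergodic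
    (measurable_apply_probabilityMeasure hZ (measurableSet_singleton 1)) hβ
      fun ν hν hνβ => hfull ν.toMeasure inferInstance hν hνβ
  exact (iInf₂_le Z ⟨hZ, hμZ⟩).trans
    (hP (nonempty_of_measure_ne_zero (hμZ.trans_ne one_ne_zero)))

theorem ae_Pmu_le [IsProbabilityMeasure μ] (hτ : IsErgodicDecomp f J μ τ) (φ : X → ℝ) :
    ∀ᵐ ν ∂τ, Pmu f φ ν.toMeasure ≤ Pmu f φ μ := by
  have countably_many : ∀ᵐ ν ∂τ, ∀ (j : ℕ) (q : ℚ), Pmu f φ μ < ((q : ℝ) : EReal) →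
      ⨅ (Z : Set X) (_ : MeasurableSet Z ∧ ν.toMeasure Z = 1), PZeps f φ Z (1 / ((j : ℝ) + 1))
        < ((q : ℝ) : EReal) := by
    refine ae_all_iff.2 fun j => ae_all_iff.2 fun q => eventually_imp_distrib_left.2 fun hq => ?_
    have hj := (le_iSup₂_of_le (1 / ((j : ℝ) + 1)) (by positivity) le_rfl).trans_lt hq
    simp only [iInf_lt_iff] at hj
    obtain ⟨Z, ⟨hZ, hμZ⟩, hlt⟩ := hj
    filter_upwards [(hτ.measure_eq_one_iff_ae hZ).1 hμZ] with ν hνZ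
    exact (iInf₂_le Z ⟨hZ, hνZ⟩).trans_lt hlt
  filter_upwards [countably_many] with ν hν
  refine iSup₂_le fun ε hε => le_of_forall_gt_imp_ge_of_dense fun c hc => ?_
  obtain ⟨q, hμq, hqc⟩ := EReal.lt_iff_exists_rat_btwn.1 hc
  obtain ⟨j, hj⟩ := exists_nat_one_div_lt hε
  exact (iInf₂_mono fun Z _ => PZeps_antitone f φ Z hj.le).trans ((hν j q hμq).le.trans hqc.le)

end IsErgodicDecomp

end Paper

theorem pressure_eq_essSup_ergodic_decomposition_general {X : Type*} [MetricSpace X]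
    [CompactSpace X] [MeasurableSpace X] [BorelSpace X] {f : X → X} {φ : X → ℝ}
    (hφ : Continuous φ) {J : Set X} {μ : Measure X} [IsProbabilityMeasure μ]
    {τ : Measure (ProbabilityMeasure X)} (hτ : IsErgodicDecomp f J μ τ) :
    Pmu f φ μ = essSup (fun ν : ProbabilityMeasure X => Pmu f φ ν.toMeasure) τ ∧
    Pmu f φ μ = essSup (fun ν : ProbabilityMeasure X =>
      ksEntropy f ν.toMeasure + ((∫ x, φ x ∂ν.toMeasure : ℝ) : EReal)) τ ∧
    ksEntropy f μ + ((∫ x, φ x ∂μ : ℝ) : EReal) ≤ Pmu f φ μ := by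
  have upper : Pmu f φ μ ≤ essSup (fun ν : ProbabilityMeasure X =>
      ksEntropy f ν.toMeasure + ((∫ x, φ x ∂ν.toMeasure : ℝ) : EReal)) τ := by
    refine le_of_forall_gt_imp_ge_of_dense fun c hc => ?_
    obtain ⟨β, hβ, hβc⟩ := EReal.lt_iff_exists_real_btwn.1 hc
    exact (hτ.Pmu_le_of_ae_lt hφ (ae_lt_of_essSup_lt hβ)).trans hβc.le
  have variational : essSup (fun ν : ProbabilityMeasure X =>
      ksEntropy f ν.toMeasure + ((∫ x, φ x ∂ν.toMeasure : ℝ) : EReal)) τ ≤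
      essSup (fun ν : ProbabilityMeasure X => Pmu f φ ν.toMeasure) τ :=
    essSup_mono_ae (hτ.ae_measurePreserving.mono fun ν hν => ksEntropy_add_integral_le_Pmu hν hφ)
  have lower : essSup (fun ν : ProbabilityMeasure X => Pmu f φ ν.toMeasure) τ ≤ Pmu f φ μ :=
    essSup_le_of_ae_le _ (hτ.ae_Pmu_le φ)
  exact ⟨(upper.trans variational).antisymm lower, upper.antisymm (variational.trans lower),
    ksEntropy_add_integral_le_Pmu hτ.measurePreserving hφ⟩

/-- Theorem 4.5 (main theorem): for any ergodic decomposition `τ` of `μ`,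
`P_μ(f,φ) = ess sup {P_ν(f,φ) : ν ∈ E(X,f)} = ess sup {h_ν(f) + ∫φ dν : ν ∈ E(X,f)}`
(essential suprema w.r.t. `τ`); consequently `P_μ(f,φ) ≥ h_μ(f) + ∫φ dμ`. -/
theorem pressure_eq_essSup_ergodic_decomposition {X : Type*} [MetricSpace X] [CompactSpace X] [MeasurableSpace X] [BorelSpace X]
    (f : X → X) (hf : Continuous f) (φ : X → ℝ) (hφ : Continuous φ)
    (μ : Measure X) (hp : IsProbabilityMeasure μ) (hinv : MeasurePreserving f μ μ)
    (τ : Measure (MeasureTheory.ProbabilityMeasure X))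
    (hτ : IsErgodicDecomp f Set.univ μ τ) :
    Pmu f φ μ =
      essSup (fun ν : MeasureTheory.ProbabilityMeasure X => Pmu f φ ν.toMeasure) τ ∧
    Pmu f φ μ =
      essSup (fun ν : MeasureTheory.ProbabilityMeasure X =>
        ksEntropy f ν.toMeasure + ((∫ x, φ x ∂ν.toMeasure : ℝ) : EReal)) τ ∧
    ksEntropy f μ + ((∫ x, φ x ∂μ : ℝ) : EReal) ≤ Pmu f φ μ :=
  pressure_eq_essSup_ergodic_decomposition_general hφ hτ
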